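/- Assume Hypothesis (H) with parameter tuple (λ, v, k, c, d, ℓ) equal to one of (3,100,12,10,10,2), (4,100,12,10,10,2), (4,231,24,11,21,2), (4,280,32,10,28,2), (4,280,32,28,10,4). Then the kernel K of the action of G on the class partition C is nontrivial, and K acts faithfully on each class Δ ∈ C. -/

import Mathlib

section GroupActions

open MulAction Finset
open scoped Classical

/-- A permutation of prime period `p` on a finite set fixes a number of points congruent to the
cardinality of the set modulo `p`. -/
theorem card_filter_fixed_modEq {G X : Type*} [Group G] [MulAction G X] {p : ℕ} (hp : p.Prime)
    {g : G} {S : Finset X} (hS : ∀ x ∈ S, g • x ∈ S) (hg : ∀ x ∈ S, g ^ p • x = x) :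
    #S ≡ #{x ∈ S | g • x = x} [MOD p] := by
  have : Fact p.Prime := ⟨hp⟩
  let f : Function.End S := fun x => ⟨g • x.1, hS x.1 x.2⟩
  have hpow : ∀ n : ℕ, ∀ x : S, ((f ^ n) x).1 = g ^ n • x.1 := by
    intro n
    induction n with
    | zero => intro x; exact (by rw [pow_zero, one_smul] : x.1 = g ^ 0 • x.1)
    | succ n ih =>
      intro x
      have hfn : (f ^ (n + 1)) x = (f ^ n) (f x) := by rw [pow_succ]; rfl
      rw [hfn, ih, pow_succ, mul_smul]
  have hf : f ^ p ^ 1 = 1 := by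
    funext x
    apply Subtype.ext
    rw [pow_one, hpow, hg x.1 x.2]
    rfl
  have h := Equiv.Perm.card_fixedPoints_modEq hf
  have hcard : Fintype.card (Function.fixedPoints f) = #{x ∈ S | g • x = x} := by
    rw [← Fintype.card_coe]
    refine Fintype.card_congr
      { toFun := fun x => ⟨x.1.1, mem_filter.mpr ⟨x.1.2, congrArg Subtype.val x.2⟩⟩
        invFun := fun x => ⟨⟨x.1, (mem_filter.mp x.2).1⟩, Subtype.ext (mem_filter.mp x.2).2⟩
        left_inv := fun x => rfl
        right_inv := fun x => rfl }
  rwa [hcard, Fintype.card_coe] at h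

/-- An element of prime period `p` fixes every point of an invariant set with fewer than `p`
points. -/
theorem smul_eq_of_card_lt {G X : Type*} [Group G] [MulAction G X] {p : ℕ} (hp : p.Prime)
    {g : G} (hg : g ^ p = 1) {S : Finset X} (hS : ∀ x ∈ S, g • x ∈ S) (hlt : #S < p) :
    ∀ x ∈ S, g • x = x := by
  have h := card_filter_fixed_modEq hp hS (fun x _ => by rw [hg, one_smul])
  have hle : #{x ∈ S | g • x = x} ≤ #S := card_filter_le _ _
  have heq : #S = #{x ∈ S | g • x = x} := Nat.ModEq.eq_of_lt_of_lt h hlt (hle.trans_lt hlt)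
  exact filter_card_eq heq.symm

theorem card_fixed_modEq {G X : Type*} [Group G] [MulAction G X] [Fintype X] {p : ℕ}
    (hp : p.Prime) {g : G} (hg : g ^ p = 1) : Fintype.card X ≡ #{x : X | g • x = x} [MOD p] :=
  card_filter_fixed_modEq hp (S := (univ : Finset X)) (fun _ _ => mem_univ _)
    (fun _ _ => by rw [hg, one_smul])

theorem card_fixed_lt_of_faithful {G X : Type*} [Group G] [MulAction G X] [Fintype X]
    (hG : ∀ g : G, (∀ x : X, g • x = x) → g = 1) {g : G} (hg : g ≠ 1) :
    #{x : X | g • x = x} < Fintype.card X := by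
  refine lt_of_le_of_ne (card_le_univ _) fun h => hg (hG g fun x => ?_)
  have hx : x ∈ ({x : X | g • x = x} : Finset X) := by
    rw [(card_eq_iff_eq_univ _).mp h]
    exact mem_univ x
  exact (mem_filter.mp hx).2

theorem card_fixed_pos {G X : Type*} [Group G] [MulAction G X] [Fintype X] {g : G} {x : X}
    (h : g • x = x) : 0 < #{x : X | g • x = x} :=
  card_pos.mpr ⟨x, mem_filter.mpr ⟨mem_univ _, h⟩⟩

theorem exists_fixed_of_card_pos {G X : Type*} [Group G] [MulAction G X] [Fintype X] {g : G}
    (h : 0 < #{x : X | g • x = x}) : ∃ x : X, g • x = x := by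
  obtain ⟨x, hx⟩ := card_pos.mp h
  exact ⟨x, (mem_filter.mp hx).2⟩

theorem card_dvd_factorial_of_faithful {G X : Type*} [Group G] [MulAction G X] [Fintype X]
    (hG : ∀ g : G, (∀ x : X, g • x = x) → g = 1) :
    Nat.card G ∣ (Fintype.card X).factorial := by
  have hinj : Function.Injective (toPermHom G X) := by
    rw [injective_iff_map_eq_one]
    exact fun g hg => hG g fun x => Equiv.Perm.congr_fun hg x
  have h := Subgroup.card_dvd_of_injective (toPermHom G X) hinj
  rwa [Nat.card_eq_fintype_card (α := Equiv.Perm X), Fintype.card_perm] at h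

theorem exists_smul_eq_pow_eq_one_of_dvd {G X : Type*} [Group G] [Finite G] [MulAction G X]
    {p : ℕ} (hp : p.Prime) {a : X} (h : p ∣ Nat.card (stabilizer G a)) :
    ∃ g : G, g ≠ 1 ∧ g ^ p = 1 ∧ g • a = a := by
  have : Fact p.Prime := ⟨hp⟩
  obtain ⟨g, hg⟩ := exists_prime_orderOf_dvd_card' p h
  refine ⟨g.1, fun h1 => ?_, ?_, g.2⟩
  · have : g = 1 := Subtype.ext h1
    rw [this, orderOf_one] at hg
    exact hp.one_lt.ne hg
  · have := pow_orderOf_eq_one g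
    rw [hg] at this
    simpa using congrArg Subtype.val this

theorem exists_pow_eq_one_of_dvd {G : Type*} [Group G] [Finite G]
    {p : ℕ} (hp : p.Prime) (h : p ∣ Nat.card G) : ∃ g : G, g ≠ 1 ∧ g ^ p = 1 := by
  have : Fact p.Prime := ⟨hp⟩
  obtain ⟨g, hg⟩ := exists_prime_orderOf_dvd_card' p h
  refine ⟨g, fun h1 => ?_, hg ▸ pow_orderOf_eq_one g⟩
  rw [h1, orderOf_one] at hg
  exact hp.one_lt.ne hg

theorem dvd_card_of_pow_eq_one {G : Type*} [Group G]
    {p : ℕ} (hp : p.Prime) {g : G} (h1 : g ≠ 1) (hg : g ^ p = 1) (H : Subgroup G) (hgH : g ∈ H) :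
    p ∣ Nat.card H := by
  have : Fact p.Prime := ⟨hp⟩
  rw [← orderOf_eq_prime hg h1, ← Subgroup.orderOf_mk g hgH]
  exact orderOf_dvd_natCard _

theorem card_mul_card_stabilizer {G X : Type*} [Group G] [MulAction G X] [Fintype X]
    [IsPretransitive G X] (a : X) :
    Fintype.card X * Nat.card (stabilizer G a) = Nat.card G := by
  rw [← Nat.card_eq_fintype_card, ← index_stabilizer_of_transitive G a, Subgroup.index_mul_card]

theorem descFactorial_dvd_card_of_isMultiplyPretransitive {G X : Type*} [Group G]
    [MulAction G X] [Fintype X] {n : ℕ} (hn : n ≤ Fintype.card X)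
    (h : IsMultiplyPretransitive G X n) : (Fintype.card X).descFactorial n ∣ Nat.card G := by
  have e : Nonempty (Fin n ↪ X) := Function.Embedding.nonempty_of_card_le (by simpa using hn)
  have : IsPretransitive G (Fin n ↪ X) := h
  have h2 := card_mul_card_stabilizer (G := G) e.some
  rw [Fintype.card_embedding_eq, Fintype.card_fin] at h2
  exact Dvd.intro _ h2

/-- An element of prime period `p` moving exactly `p` points is transitive on these points. -/
theorem exists_pow_smul_eq_of_prime_cycle {G X : Type*} [Group G] [MulAction G X] [Fintype X]
    {p : ℕ} (hp : p.Prime) {g : G} (hg : ∀ x : X, g ^ p • x = x)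
    (hfp : #{x : X | g • x = x} + p = Fintype.card X) {x y : X} (hx : g • x ≠ x)
    (hy : g • y ≠ y) : ∃ i : ℕ, g ^ i • x = y := by
  have hmove : ∀ i : ℕ, g • g ^ i • x ≠ g ^ i • x := by
    intro i h
    rw [← mul_smul, ← pow_succ', pow_succ, mul_smul] at h
    exact hx (smul_left_cancel _ h)
  let T : Finset X := (range p).image fun i => g ^ i • x
  have hT : ∀ z ∈ T, g • z ∈ T := by
    intro z hz
    obtain ⟨i, hi, rfl⟩ := mem_image.mp hz
    rw [← mul_smul, ← pow_succ']
    rcases Nat.lt_or_ge (i + 1) p with hip | hip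
    · exact mem_image_of_mem (fun i => g ^ i • x) (mem_range.mpr hip)
    · have hip' : i + 1 = p := le_antisymm (mem_range.mp hi) hip
      refine mem_image.mpr ⟨0, mem_range.mpr hp.pos, ?_⟩
      rw [hip', hg, pow_zero, one_smul]
  have hfix : #{z ∈ T | g • z = z} = 0 := by
    rw [card_eq_zero, filter_eq_empty_iff]
    intro z hz
    obtain ⟨i, -, rfl⟩ := mem_image.mp hz
    exact hmove i
  have hmod := card_filter_fixed_modEq hp hT fun z _ => hg z
  rw [hfix] at hmod
  have hpos : 0 < #T := card_pos.mpr ⟨_, mem_image_of_mem _ (mem_range.mpr hp.pos)⟩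
  have hpT : p ≤ #T := Nat.le_of_dvd hpos ((Nat.modEq_zero_iff_dvd).mp hmod)
  have hcard : #{z : X | ¬ g • z = z} = p := by
    have := card_filter_add_card_filter_not (s := (univ : Finset X)) (fun z => g • z = z)
    rw [card_univ] at this
    omega
  have hsub : T ⊆ ({z : X | ¬ g • z = z} : Finset X) := by
    intro z hz
    obtain ⟨i, -, rfl⟩ := mem_image.mp hz
    exact mem_filter.mpr ⟨mem_univ _, hmove i⟩
  have hTeq := eq_of_subset_of_card_le hsub (by omega)
  have hyT : y ∈ T := hTeq ▸ mem_filter.mpr ⟨mem_univ _, hy⟩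
  obtain ⟨i, -, hi⟩ := mem_image.mp hyT
  exact ⟨i, hi⟩

/-- Jordan's theorem for cycles of prime length, in the form of multiple transitivity. -/
theorem isMultiplyPretransitive_of_prime_cycle {G X : Type*} [Group G] [MulAction G X]
    [Fintype X] (hG : IsPreprimitive G X) {p f : ℕ} (hp : p.Prime) {g : G}
    (hg : ∀ x : X, g ^ p • x = x) (hf : #{x : X | g • x = x} = f + 1)
    (hfp : f + 1 + p = Fintype.card X) : IsMultiplyPretransitive G X (f + 2) := by
  let s : Set X := {x | g • x = x}
  have hs : s.ncard = f + 1 := by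
    rw [← hf, Set.ncard_eq_toFinset_card']
    congr 1
    ext x
    simp [s]
  have hcompl : sᶜ.ncard = p := by
    have := Set.ncard_add_ncard_compl s
    rw [Nat.card_eq_fintype_card] at this
    omega
  let g' : fixingSubgroup G s := ⟨g, (mem_fixingSubgroup_iff G).mpr fun y hy => hy⟩
  have hcardY : Nat.card (SubMulAction.ofFixingSubgroup G s) = p := by
    rw [← hcompl, ← Nat.card_coe_set_eq]
    exact Nat.card_congr (Equiv.subtypeEquivRight fun x => SubMulAction.mem_ofFixingSubgroup_iff G)
  have htrans : IsPretransitive (fixingSubgroup G s) (SubMulAction.ofFixingSubgroup G s) := by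
    refine ⟨fun x y => ?_⟩
    have hx : g • x.1 ≠ x.1 := (SubMulAction.mem_ofFixingSubgroup_iff G).mp x.2
    have hy : g • y.1 ≠ y.1 := (SubMulAction.mem_ofFixingSubgroup_iff G).mp y.2
    obtain ⟨i, hi⟩ := exists_pow_smul_eq_of_prime_cycle hp hg (by omega) hx hy
    exact ⟨g' ^ i, Subtype.ext hi⟩
  have hprim : IsPreprimitive (fixingSubgroup G s) (SubMulAction.ofFixingSubgroup G s) :=
    IsPreprimitive.of_prime_card (hcardY.symm ▸ hp)
  have := hG.isMultiplyPreprimitive hs (by rw [Nat.card_eq_fintype_card]; have := hp.two_le; omega)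
    hprim
  infer_instance

end GroupActions

section NormalSubgroups

/-- A normal subgroup `N` of a normal subgroup `K` of `G` is contained in a normal subgroup of `K`
which is invariant under conjugation by `G` and whose order has no new prime divisors. -/
theorem exists_normal_ge_of_normal {G : Type*} [Group G] [Finite G] (K : Subgroup G) [K.Normal]
    (N : Subgroup K) (hN : N.Normal) :
    ∃ M : Subgroup K, N ≤ M ∧ (∀ g : G, ∀ x ∈ M, MulAut.conjNormal g x ∈ M) ∧
      ∀ p : ℕ, p.Prime → p ∣ Nat.card M → p ∣ Nat.card N := by
  let Q : Set (Subgroup K) :=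
    {M | M.Normal ∧ ∀ p : ℕ, p.Prime → p ∣ Nat.card M → p ∣ Nat.card N}
  have hsup : ∀ M₁ ∈ Q, ∀ M₂ ∈ Q, M₁ ⊔ M₂ ∈ Q := by
    rintro M₁ ⟨h₁, hp₁⟩ M₂ ⟨h₂, hp₂⟩
    refine ⟨Subgroup.sup_normal M₁ M₂, fun p hp hdvd => ?_⟩
    have hcard : Nat.card (M₁ ⊔ M₂ : Subgroup K) = M₂.relIndex M₁ * Nat.card M₂ := by
      rw [← Subgroup.relIndex_sup_right, ← Subgroup.relIndex_bot_left, ← Subgroup.relIndex_bot_left,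
        mul_comm]
      exact (Subgroup.relIndex_mul_relIndex ⊥ M₂ (M₁ ⊔ M₂) bot_le le_sup_right).symm
    rw [hcard] at hdvd
    rcases hp.dvd_mul.mp hdvd with h | h
    · exact hp₁ p hp (h.trans (Subgroup.relIndex_dvd_card M₂ M₁))
    · exact hp₂ p hp h
  obtain ⟨M, hM⟩ := (Set.toFinite Q).exists_maximal ⟨N, hN, fun _ _ h => h⟩
  have hle : ∀ M' ∈ Q, M' ≤ M := fun M' hM' =>
    le_sup_left.trans (hM.le_of_ge (hsup M' hM' M hM.prop) le_sup_right)
  refine ⟨M, hle N ⟨hN, fun _ _ h => h⟩, fun g x hx => ?_, hM.prop.2⟩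
  have hmap : M.map (MulAut.conjNormal g : MulAut K).toMonoidHom ∈ Q := by
    refine ⟨hM.prop.1.map _ (MulAut.conjNormal g : MulAut K).surjective, ?_⟩
    have : Nat.card (M.map (MulAut.conjNormal g : MulAut K).toMonoidHom) = Nat.card M :=
      Subgroup.card_map_of_injective (MulAut.conjNormal g : MulAut K).injective
    rw [this]
    exact hM.prop.2
  exact hle _ hmap (Subgroup.mem_map_of_mem (MulAut.conjNormal g : MulAut K).toMonoidHom hx)

end NormalSubgroups

section Normalizers

open MulAction Finset
open scoped Classical

theorem exists_pow_eq_conj_of_mem_normalizer {G : Type*} [Group G] [Finite G] {g n : G}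
    (hn : n ∈ Subgroup.normalizer (Subgroup.zpowers g : Set G)) :
    ∃ i : ℕ, n * g * n⁻¹ = g ^ i := by
  have h := (Subgroup.mem_normalizer_iff.mp hn g).mp (Subgroup.mem_zpowers g)
  obtain ⟨i, hi⟩ := (mem_powers_iff_mem_zpowers (x := g)).mpr h
  exact ⟨i, hi.symm⟩

theorem smul_smul_eq_of_mem_normalizer {G X : Type*} [Group G] [Finite G] [MulAction G X] {g n : G}
    (hn : n ∈ Subgroup.normalizer (Subgroup.zpowers g : Set G)) {a : X} (ha : g • a = a) :
    g • n • a = n • a := by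
  obtain ⟨i, hi⟩ := exists_pow_eq_conj_of_mem_normalizer (inv_mem hn)
  have hgi : g ^ i • a = a :=
    (Subgroup.pow_mem (stabilizer G a) (mem_stabilizer_iff.mpr ha) i : g ^ i ∈ stabilizer G a)
  rw [← hi, inv_inv, mul_smul, mul_smul, inv_smul_eq_iff] at hgi
  exact hgi

/-- If `g` generates a Sylow `p`-subgroup of order `p`, then the normalizer of this subgroup fuses
any two fixed points of `g` in the same orbit. -/
theorem exists_mem_normalizer_smul_eq {G X : Type*} [Group G] [Finite G] [MulAction G X] {p : ℕ}
    (hp : p.Prime) {g : G} (hg1 : g ≠ 1) (hgp : g ^ p = 1) (hG : ¬ p ^ 2 ∣ Nat.card G) {a b : X}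
    (ha : g • a = a) (hb : g • b = b) {h : G} (hab : h • a = b) :
    ∃ n ∈ Subgroup.normalizer (Subgroup.zpowers g : Set G), n • a = b := by
  have : Fact p.Prime := ⟨hp⟩
  have hord : orderOf g = p := orderOf_eq_prime hgp hg1
  have hfac : (Nat.card G).factorization p = 1 := by
    have h0 : Nat.card G ≠ 0 := Nat.card_pos.ne'
    have h1 := (hp.pow_dvd_iff_le_factorization h0 (k := 2)).not.mp hG
    have h2 := (hp.dvd_iff_one_le_factorization h0).mp (hord ▸ orderOf_dvd_natCard g)
    omega
  let P : Sylow p G := Sylow.ofCard (Subgroup.zpowers g) (by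
    rw [Nat.card_zpowers, hord, hfac, pow_one])
  have hP : (P : Subgroup G) = Subgroup.zpowers g := rfl
  have h1 : (P : Subgroup G) ≤ stabilizer G b := by
    rw [hP, Subgroup.zpowers_le]
    exact hb
  have h2 : ((h • P : Sylow p G) : Subgroup G) ≤ stabilizer G b := by
    rintro - ⟨z, hz, rfl⟩
    have hz' : z ∈ stabilizer G a := (Subgroup.zpowers_le.mpr ha : Subgroup.zpowers g ≤ _) hz
    change (h * z * h⁻¹) • b = b
    rw [mul_smul, mul_smul, inv_smul_eq_iff.mpr hab.symm, mem_stabilizer_iff.mp hz', hab]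
  obtain ⟨z, hz⟩ := exists_smul_eq (stabilizer G b) ((h • P).subtype h2) (P.subtype h1)
  simp_rw [Sylow.smul_subtype, Subgroup.smul_def, smul_smul] at hz
  refine ⟨z * h, Sylow.smul_eq_iff_mem_normalizer.mp (Sylow.subtype_injective hz), ?_⟩
  rw [mul_smul, hab]
  exact z.2

theorem card_fixed_dvd_card_normalizer {G X : Type*} [Group G] [Finite G] [MulAction G X]
    [Fintype X] [IsPretransitive G X] {p : ℕ} (hp : p.Prime) {g : G} (hg1 : g ≠ 1)
    (hgp : g ^ p = 1) (hG : ¬ p ^ 2 ∣ Nat.card G) (hpos : 0 < #{x : X | g • x = x}) :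
    #{x : X | g • x = x} ∣
      Nat.card (Subgroup.normalizer (Subgroup.zpowers g : Set G)) := by
  obtain ⟨a, ha⟩ := exists_fixed_of_card_pos hpos
  have horbit : (orbit (Subgroup.normalizer (Subgroup.zpowers g : Set G)) a).ncard =
      #{x : X | g • x = x} := by
    rw [Set.ncard_eq_toFinset_card']
    congr 1
    ext x
    simp only [Set.mem_toFinset, mem_filter, mem_univ, true_and]
    constructor
    · rintro ⟨n, rfl⟩
      exact smul_smul_eq_of_mem_normalizer n.2 ha
    · intro hx
      obtain ⟨h, hh⟩ := exists_smul_eq G a x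
      obtain ⟨n, hn, rfl⟩ := exists_mem_normalizer_smul_eq hp hg1 hgp hG ha hx hh
      exact ⟨⟨n, hn⟩, rfl⟩
  rw [← horbit, ← index_stabilizer]
  exact Subgroup.index_dvd_card _

theorem card_fixed_embeddings {G X : Type*} [Group G] [MulAction G X] [Fintype X] (g : G) (n : ℕ) :
    #{e : Fin n ↪ X | g • e = e} = (#{x : X | g • x = x}).descFactorial n := by
  rw [← Fintype.card_subtype, ← Fintype.card_subtype]
  have hcard := Fintype.card_embedding_eq (α := Fin n) (β := {x : X // g • x = x})
  rw [Fintype.card_fin] at hcard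
  rw [← hcard]
  refine Fintype.card_congr
    { toFun := fun e => ⟨fun i => ⟨e.1 i, DFunLike.congr_fun e.2 i⟩, fun i j hij =>
        e.1.injective (congrArg Subtype.val hij)⟩
      invFun := fun e => ⟨e.trans (Function.Embedding.subtype _), by
        ext i
        exact (e i).2⟩
      left_inv := fun e => rfl
      right_inv := fun e => rfl }

/-- The symmetric group of degree ten has Sylow `3`-subgroups of order `81`, and each of them
contains a `3`-cycle. -/
theorem exists_threeCycle_of_card_eq_ten {X : Type*} [Fintype X] (hX : Fintype.card X = 10)
    (Q : Subgroup (Equiv.Perm X)) (hQ : 81 ∣ Nat.card Q) :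
    ∃ q ∈ Q, q ^ 3 = 1 ∧ #{x : X | q x = x} = 7 := by
  have : Fact (Nat.Prime 3) := ⟨Nat.prime_three⟩
  obtain ⟨R, hR⟩ := Sylow.exists_subgroup_card_pow_prime (G := Q) 3 (n := 4) hQ
  have hcardX : Nat.card (Equiv.Perm X) = Nat.factorial 10 := by
    rw [Nat.card_eq_fintype_card, Fintype.card_perm, hX]
  have hfac : (Nat.card (Equiv.Perm X)).factorization 3 = 4 := by
    have h0 : Nat.factorial 10 ≠ 0 := Nat.factorial_ne_zero 10
    rw [hcardX]
    have h1 := (Nat.prime_three.pow_dvd_iff_le_factorization h0 (k := 4)).mp (by decide)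
    have h2 := (Nat.prime_three.pow_dvd_iff_le_factorization h0 (k := 5)).not.mp (by decide)
    omega
  let S : Sylow 3 (Equiv.Perm X) := Sylow.ofCard (R.map Q.subtype) (by
    rw [Subgroup.card_map_of_injective Q.subtype_injective, hR, hfac])
  obtain ⟨a, b, c, hab, hac, hbc⟩ : ∃ a b c : X, a ≠ b ∧ a ≠ c ∧ b ≠ c :=
    Fintype.two_lt_card_iff.mp (by omega)
  let τ : Equiv.Perm X := Equiv.swap a b * Equiv.swap a c
  have hτ : τ.IsThreeCycle := Equiv.Perm.isThreeCycle_swap_mul_swap_same hab hac hbc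
  have hτ3 : τ ^ 3 = 1 := by rw [← hτ.orderOf, pow_orderOf_eq_one]
  have hτP : IsPGroup 3 (Subgroup.zpowers τ) := by
    apply IsPGroup.of_card (n := 1)
    rw [Nat.card_zpowers, hτ.orderOf, pow_one]
  obtain ⟨S', hS'⟩ := hτP.exists_le_sylow
  obtain ⟨h, hh⟩ := exists_smul_eq (Equiv.Perm X) S' S
  have hmem : h * τ * h⁻¹ ∈ (S : Subgroup (Equiv.Perm X)) := by
    rw [← hh]
    exact ⟨τ, hS' (Subgroup.mem_zpowers τ), rfl⟩
  obtain ⟨q, -, hq⟩ : h * τ * h⁻¹ ∈ R.map Q.subtype := hmem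
  refine ⟨h * τ * h⁻¹, hq ▸ q.2, by rw [conj_pow, hτ3, mul_one, mul_inv_cancel], ?_⟩
  have hcyc : (h * τ * h⁻¹).IsThreeCycle := by
    rw [Equiv.Perm.IsThreeCycle, Equiv.Perm.cycleType_conj]
    exact hτ
  have h3 := hcyc.card_support
  have h4 := card_filter_add_card_filter_not (s := (univ : Finset X))
    (fun x => (h * τ * h⁻¹) x = x)
  rw [card_univ, hX] at h4
  have h5 : (h * τ * h⁻¹).support = ({x | ¬ (h * τ * h⁻¹) x = x} : Finset X) := by
    ext x
    rw [Equiv.Perm.mem_support, mem_filter]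
    simp
  rw [h5] at h3
  omega

theorem commute_of_mem_normalizer_of_pow_three {G : Type*} [Group G] [Finite G] {g y : G}
    (hg1 : g ≠ 1) (hg : g ^ 5 = 1) (hy : y ∈ Subgroup.normalizer (Subgroup.zpowers g : Set G))
    (hy3 : y ^ 3 = 1) : y * g = g * y := by
  have : Fact (Nat.Prime 5) := ⟨by norm_num⟩
  obtain ⟨i, hi⟩ := exists_pow_eq_conj_of_mem_normalizer hy
  have hpow : ∀ j : ℕ, y * g ^ j * y⁻¹ = g ^ (i * j) := by
    intro j
    rw [← conj_pow, hi, pow_mul]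
  have hcube : g ^ (i * (i * i)) = g ^ 1 :=
    calc g ^ (i * (i * i)) = y * (y * (y * g * y⁻¹) * y⁻¹) * y⁻¹ := by rw [hi, hpow, hpow]
      _ = y ^ 3 * g * (y ^ 3)⁻¹ := by
        simp only [pow_succ, pow_zero, one_mul, mul_inv_rev, mul_assoc]
      _ = g ^ 1 := by rw [hy3, one_mul, inv_one, mul_one, pow_one]
  rw [pow_eq_pow_iff_modEq, orderOf_eq_prime hg hg1] at hcube
  have hi1 : i ≡ 1 [MOD 5] := by
    unfold Nat.ModEq at hcube ⊢
    have hlt := Nat.mod_lt i (by norm_num : 0 < 5)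
    rw [Nat.mul_mod, Nat.mul_mod i i] at hcube
    interval_cases h : i % 5 <;> simp_all
  have hgi : g ^ i = g ^ 1 := by
    rw [pow_eq_pow_iff_modEq, orderOf_eq_prime hg hg1]
    exact hi1
  rw [hgi, pow_one, mul_inv_eq_iff_eq_mul] at hi
  exact hi

end Normalizers

section ThreeCycles

open MulAction Finset
open scoped Classical

theorem exists_mem_normalizer_forall_smul_eq {G X : Type*} [Group G] [Finite G] [MulAction G X]
    {m p : ℕ} (hX : IsMultiplyPretransitive G X m) (hp : p.Prime) {g : G} (hg1 : g ≠ 1)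
    (hgp : g ^ p = 1) (hG : ¬ p ^ 2 ∣ Nat.card G) {x y : Fin m → X} (hx : Function.Injective x)
    (hy : Function.Injective y) (hgx : ∀ i, g • x i = x i) (hgy : ∀ i, g • y i = y i) :
    ∃ n ∈ Subgroup.normalizer (Subgroup.zpowers g : Set G), ∀ i, n • x i = y i := by
  have : IsPretransitive G (Fin m ↪ X) := hX
  obtain ⟨h, hh⟩ := exists_smul_eq G (⟨x, hx⟩ : Fin m ↪ X) ⟨y, hy⟩
  obtain ⟨n, hn, hnx⟩ := exists_mem_normalizer_smul_eq (X := Fin m ↪ X) hp hg1 hgp hG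
    (Function.Embedding.ext hgx) (Function.Embedding.ext hgy) hh
  exact ⟨n, hn, DFunLike.congr_fun hnx⟩

theorem injective_vec_three {X : Type*} {a b c : X} (hab : a ≠ b) (hac : a ≠ c) (hbc : b ≠ c) :
    Function.Injective ![a, b, c] := by
  intro i j hij
  fin_cases i <;> fin_cases j <;> simp_all

/-- A commutator of two elements normalizing the cyclic group generated by `g` commutes with `g`. -/
theorem commute_commutator_of_conj_eq_pow {G : Type*} [Group G] {g a b : G} {i j : ℕ}
    (ha : a * g * a⁻¹ = g ^ i) (hb : b * g * b⁻¹ = g ^ j) : Commute ((b * a)⁻¹ * (a * b)) g := by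
  have h1 : (a * b) * g * (a * b)⁻¹ = g ^ (i * j) := by
    calc (a * b) * g * (a * b)⁻¹ = a * (b * g * b⁻¹) * a⁻¹ := by group
      _ = g ^ (i * j) := by rw [hb, ← conj_pow, ha, pow_mul]
  have h2 : (b * a) * g * (b * a)⁻¹ = g ^ (i * j) := by
    calc (b * a) * g * (b * a)⁻¹ = b * (a * g * a⁻¹) * b⁻¹ := by group
      _ = g ^ (i * j) := by rw [ha, ← conj_pow, hb, ← pow_mul, mul_comm]
  have h3 : (a * b) * g = g ^ (i * j) * (a * b) := by rw [← h1]; group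
  have h4 : (b * a)⁻¹ * g ^ (i * j) = g * (b * a)⁻¹ := by rw [← h2]; group
  rw [commute_iff_eq, mul_assoc, h3, ← mul_assoc, h4, mul_assoc]

/-- A triply transitive group of degree ten whose Sylow `7`-subgroups have order `7` contains an
element inducing a `3`-cycle if it contains an element of order `7` fixing three points. -/
theorem exists_threeCycle_of_fixed_eq_three {G X : Type*} [Group G] [Finite G] [MulAction G X]
    [Fintype X] (hX : IsMultiplyPretransitive G X 3) (hcard : Fintype.card X = 10) {g : G}
    (hg1 : g ≠ 1) (hg7 : g ^ 7 = 1) (hG : ¬ 7 ^ 2 ∣ Nat.card G)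
    (hfix : #{x : X | g • x = x} = 3) :
    ∃ z : G, (∀ x : X, z ^ 3 • x = x) ∧ #{x : X | z • x = x} = 7 := by
  have h7 : Nat.Prime 7 := by norm_num
  obtain ⟨x₀, x₁, x₂, h01, h02, h12, hF⟩ := card_eq_three.mp hfix
  have hmem : ∀ x : X, g • x = x ↔ x = x₀ ∨ x = x₁ ∨ x = x₂ := by
    intro x
    have : x ∈ ({x : X | g • x = x} : Finset X) ↔ x ∈ ({x₀, x₁, x₂} : Finset X) := by rw [hF]
    simpa using this
  have hg0 : g • x₀ = x₀ := (hmem x₀).mpr (by simp)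
  have hgx1 : g • x₁ = x₁ := (hmem x₁).mpr (by simp)
  have hg2 : g • x₂ = x₂ := (hmem x₂).mpr (by simp)
  obtain ⟨a, haN, ha⟩ := exists_mem_normalizer_forall_smul_eq hX h7 hg1 hg7 hG
    (injective_vec_three h01 h02 h12) (injective_vec_three h01.symm h12 h02)
    (fun i => by fin_cases i <;> assumption) (fun i => by fin_cases i <;> assumption)
  obtain ⟨b, hbN, hb⟩ := exists_mem_normalizer_forall_smul_eq hX h7 hg1 hg7 hG
    (injective_vec_three h01 h02 h12) (injective_vec_three h12 h01.symm h02.symm)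
    (fun i => by fin_cases i <;> assumption) (fun i => by fin_cases i <;> assumption)
  have ha0 : a • x₀ = x₁ := ha 0
  have ha1 : a • x₁ = x₀ := ha 1
  have ha2 : a • x₂ = x₂ := ha 2
  have hb0 : b • x₀ = x₁ := hb 0
  have hb1 : b • x₁ = x₂ := hb 1
  have hb2 : b • x₂ = x₀ := hb 2
  obtain ⟨i, hi⟩ := exists_pow_eq_conj_of_mem_normalizer haN
  obtain ⟨j, hj⟩ := exists_pow_eq_conj_of_mem_normalizer hbN
  have hcomm := commute_commutator_of_conj_eq_pow hi hj
  set y : G := (b * a)⁻¹ * (a * b) with hy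
  have hy0 : y • x₀ = x₂ := by
    rw [hy, mul_smul, inv_smul_eq_iff, mul_smul, mul_smul, hb0, ha1, ha2, hb2]
  have hy1 : y • x₁ = x₀ := by
    rw [hy, mul_smul, inv_smul_eq_iff, mul_smul, mul_smul, hb1, ha2, ha0, hb1]
  have hy2 : y • x₂ = x₁ := by
    rw [hy, mul_smul, inv_smul_eq_iff, mul_smul, mul_smul, hb2, ha0, ha1, hb0]
  have hz : ∀ w : X, y ^ 7 • w = y • y • y • y • y • y • y • w := by
    intro w
    simp only [pow_succ, pow_zero, one_mul, mul_smul]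
  have hz0 : y ^ 7 • x₀ = x₂ := by rw [hz]; simp only [hy0, hy1, hy2]
  have hz1 : y ^ 7 • x₁ = x₀ := by rw [hz]; simp only [hy0, hy1, hy2]
  have hz2 : y ^ 7 • x₂ = x₁ := by rw [hz]; simp only [hy0, hy1, hy2]
  have hmoved : ∀ x : X, g • x ≠ x → y ^ 7 • x = x := by
    intro x hx
    have hyx : g • y • x ≠ y • x := by
      intro h
      rw [← mul_smul, ← hcomm.eq, mul_smul] at h
      exact hx (smul_left_cancel y h)
    obtain ⟨m, hm⟩ := exists_pow_smul_eq_of_prime_cycle h7 (fun x => by rw [hg7, one_smul])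
      (by rw [hfix, hcard]) hx hyx
    have hpow : ∀ n : ℕ, y ^ n • x = (g ^ m) ^ n • x := by
      intro n
      induction n with
      | zero => rw [pow_zero, pow_zero]
      | succ n ih =>
        rw [pow_succ, mul_smul, ← hm, ← mul_smul, ((hcomm.pow_left n).pow_right m).eq, mul_smul, ih,
          ← mul_smul, ← pow_succ']
    rw [hpow, ← pow_mul, mul_comm, pow_mul, hg7, one_pow, one_smul]
  refine ⟨y ^ 7, fun x => ?_, ?_⟩
  · have h3 : ∀ w : X, (y ^ 7) ^ 3 • w = y ^ 7 • y ^ 7 • y ^ 7 • w := by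
      intro w
      rw [pow_succ, pow_two, mul_smul, mul_smul]
    rw [h3]
    by_cases hx : g • x = x
    · rcases (hmem x).mp hx with rfl | rfl | rfl <;> simp only [hz0, hz1, hz2]
    · simp only [hmoved x hx]
  · have hsplit := card_filter_add_card_filter_not (s := (univ : Finset X)) (fun x => g • x = x)
    rw [card_univ, hcard, hfix] at hsplit
    have heq : ({x : X | y ^ 7 • x = x} : Finset X) = ({x : X | ¬ g • x = x} : Finset X) := by
      ext x
      simp only [mem_filter, mem_univ, true_and]
      refine ⟨fun h hx => ?_, hmoved x⟩
      rcases (hmem x).mp hx with rfl | rfl | rfl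
      · exact h02 (h.symm.trans hz0)
      · exact h01 (hz1.symm.trans h)
      · exact h12 (hz2.symm.trans h)
    rw [heq]
    omega

end ThreeCycles

section Primitivity

open MulAction Finset
open scoped Classical Pointwise

/-- In a primitive group, if every element of prime period `p` fixing `a` also fixes some `b ≠ a`,
then these elements act trivially. -/
theorem smul_eq_of_forall_pow_eq_one {G X : Type*} [Group G] [Finite G] [MulAction G X]
    (hG : IsPreprimitive G X) {p : ℕ} {a b : X} (hab : a ≠ b)
    (h : ∀ g : G, g ^ p = 1 → g • a = a → g • b = b) {g : G} (hg : g ^ p = 1) (hga : g • a = a)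
    (x : X) : g • x = x := by
  let E : X → Set G := fun x => {g | g ^ p = 1 ∧ g • x = x}
  have hconj : ∀ (t g : G) (x : X), g ∈ E x → t * g * t⁻¹ ∈ E (t • x) := by
    rintro t g x ⟨h1, h2⟩
    refine ⟨by rw [conj_pow, h1, mul_one, mul_inv_cancel], ?_⟩
    rw [mul_smul, mul_smul, inv_smul_smul, h2]
  have hncard : ∀ x y : X, (E x).ncard ≤ (E y).ncard := by
    intro x y
    obtain ⟨t, rfl⟩ := exists_smul_eq G x y
    exact Set.ncard_le_ncard_of_injOn (fun g => t * g * t⁻¹) (fun g hg => hconj t g x hg)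
      (fun g₁ _ g₂ _ h => by simpa using h) (Set.toFinite _)
  have hsub : E a ⊆ E b := fun g hg => ⟨hg.1, h g hg.1 hg.2⟩
  have heq : E b = E a := (Set.eq_of_subset_of_ncard_le hsub (hncard b a)).symm
  have htrans : ∀ (t : G) (x y : X), E x = E y → E (t • x) = E (t • y) := by
    have hsub : ∀ (t : G) (x y : X), E x = E y → E (t • x) ⊆ E (t • y) := by
      intro t x y hxy g hg
      have h1 := hconj t⁻¹ g _ hg
      rw [inv_smul_smul, hxy] at h1
      have h2 := hconj t _ _ h1
      have h3 : t * (t⁻¹ * g * t⁻¹⁻¹) * t⁻¹ = g := by group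
      rwa [h3] at h2
    exact fun t x y hxy => (hsub t x y hxy).antisymm (hsub t y x hxy.symm)
  have hblock : IsBlock G {x | E x = E a} := by
    rw [isBlock_iff_smul_eq_of_nonempty]
    rintro t ⟨_, ⟨y, hy, rfl⟩, hty⟩
    have hta : E (t • a) = E a := (htrans t y a hy).symm.trans hty
    ext z
    rw [Set.mem_smul_set_iff_inv_smul_mem]
    constructor
    · intro hz
      have := htrans t _ _ hz
      rw [smul_inv_smul] at this
      exact this.trans hta
    · intro hz
      have := htrans t⁻¹ _ _ (hz.trans hta.symm)
      rwa [inv_smul_smul] at this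
  rcases hblock.subsingleton_or_eq_univ with hs | hu
  · exact absurd (hs (rfl : E a = E a) heq) hab
  · have hx : E x = E a := (hu ▸ Set.mem_univ x : x ∈ {x | E x = E a})
    exact (hx ▸ (⟨hg, hga⟩ : g ∈ E a) : g ∈ E x).2

/-- A transitive group of degree nine containing an element of order five is primitive. -/
theorem isPreprimitive_of_card_eq_nine {G X : Type*} [Group G] [MulAction G X] [Fintype X]
    [IsPretransitive G X] (hX : Fintype.card X = 9) {g : G} (hg : g ^ 5 = 1)
    (hfix : #{x : X | g • x = x} = 4) : IsPreprimitive G X := by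
  have h5 : Nat.Prime 5 := by norm_num
  obtain ⟨a, ha⟩ := exists_fixed_of_card_pos (X := X) (g := g) (by omega)
  have hfixblock : ∀ Y : Set X, IsBlock G Y → Y.ncard = 3 → ∀ b ∈ Y, g • b = b →
      Y.toFinset ⊆ ({x | g • x = x} : Finset X) := by
    intro Y hY hcard b hb hgb x hx
    have hgY : g • Y = Y := hY.smul_eq_of_mem hb (hgb.symm ▸ hb)
    refine mem_filter.mpr ⟨mem_univ _, smul_eq_of_card_lt h5 hg (S := Y.toFinset) ?_ ?_ x hx⟩
    · intro z hz
      rw [Set.mem_toFinset] at hz ⊢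
      exact hgY ▸ Set.smul_mem_smul_set hz
    · rw [← Set.ncard_eq_toFinset_card', hcard]
      norm_num
  refine IsPreprimitive.of_isTrivialBlock_base a fun {Y} haY hY => ?_
  have hdvd := hY.ncard_dvd_card ⟨a, haY⟩
  rw [Nat.card_eq_fintype_card, hX] at hdvd
  have hmem : Y.ncard ∈ Nat.divisors 9 := Nat.mem_divisors.mpr ⟨hdvd, by norm_num⟩
  rw [show Nat.divisors 9 = {1, 3, 9} by decide] at hmem
  simp only [mem_insert, mem_singleton] at hmem
  rcases hmem with h | h | h
  · exact Or.inl (Set.ncard_le_one_iff_subsingleton.mp h.le)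
  · exfalso
    have hsub := hfixblock Y hY h a haY ha
    have hYcard : #Y.toFinset = 3 := by rw [← Set.ncard_eq_toFinset_card', h]
    obtain ⟨b, hb, hbY⟩ := exists_mem_notMem_of_card_lt_card
      (by omega : #Y.toFinset < #{x : X | g • x = x})
    rw [Set.mem_toFinset] at hbY
    obtain ⟨t, rfl⟩ := exists_smul_eq G a b
    have htY : t • a ∈ t • Y := Set.smul_mem_smul_set haY
    have htcard : (t • Y).ncard = 3 := by rw [Set.ncard_smul_set, h]
    have hsub' := hfixblock (t • Y) (hY.translate t) htcard (t • a) htY (mem_filter.mp hb).2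
    have hdisj : Disjoint (t • Y) Y :=
      (hY.smul_eq_or_disjoint t).resolve_left fun h => hbY (h ▸ htY)
    have hle := card_le_card (union_subset hsub' hsub)
    rw [card_union_of_disjoint (Set.disjoint_toFinset.mpr hdisj), hYcard,
      ← Set.ncard_eq_toFinset_card', htcard] at hle
    omega
  · right
    rw [Set.eq_univ_iff_ncard, h, Nat.card_eq_fintype_card, hX]

theorem seven_dvd_card_of_card_eq_nine {G X : Type*} [Group G] [MulAction G X] [Fintype X]
    [IsPretransitive G X] (hX : Fintype.card X = 9) {g : G} (hg : g ^ 5 = 1)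
    (hfix : #{x : X | g • x = x} = 4) : 7 ∣ Nat.card G := by
  have hmt := isMultiplyPretransitive_of_prime_cycle (isPreprimitive_of_card_eq_nine hX hg hfix)
    (by norm_num : Nat.Prime 5) (fun x => by rw [hg, one_smul]) (f := 3) hfix (by rw [hX])
  have hdvd := descFactorial_dvd_card_of_isMultiplyPretransitive (by rw [hX]; norm_num) hmt
  rw [hX] at hdvd
  exact (by decide : 7 ∣ Nat.descFactorial 9 (3 + 2)).trans hdvd

end Primitivity

section Designs

open MulAction Finset
open scoped Classical Pointwise

/-- A `2`-design with `G`-invariant incidence relation `I` and `G`-invariant class map `cl` on which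
`G` acts flag-transitively, the classes having `c` points each and meeting blocks in `0` or `ℓ`
points. -/
structure IsFlagTransitiveDesign (G : Type*) {Ω Bl C : Type*} [Group G] [MulAction G Ω]
    [MulAction G Bl] [MulAction G C] [Fintype Ω] [Fintype Bl] [Fintype C]
    (I : Ω → Bl → Prop) (cl : Ω → C) (lam k c ℓ : ℕ) : Prop where
  smul_incident : ∀ (g : G) (x : Ω) (B : Bl), I x B → I (g • x) (g • B)
  class_smul : ∀ (g : G) (x : Ω), cl (g • x) = g • cl x
  card_block : ∀ B : Bl, #{x | I x B} = k
  card_pair : ∀ x y : Ω, x ≠ y → #{B | I x B ∧ I y B} = lam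
  exists_flag_smul : ∀ (x y : Ω) (B B' : Bl), I x B → I y B' → ∃ g : G, g • x = y ∧ g • B = B'
  card_class : ∀ Δ : C, #{x | cl x = Δ} = c
  card_inter : ∀ (x : Ω) (B : Bl), I x B → #{y | I y B ∧ cl y = cl x} = ℓ
  faithful : ∀ g : G, (∀ x : Ω, g • x = x) → g = 1
  one_le_lam : 1 ≤ lam
  two_le_c : 2 ≤ c
  two_le_l : 2 ≤ ℓ

namespace IsFlagTransitiveDesign

variable {G Ω Bl C : Type*} [Group G] [MulAction G Ω] [MulAction G Bl] [MulAction G C]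
  [Fintype Ω] [Fintype Bl] [Fintype C] {I : Ω → Bl → Prop} {cl : Ω → C} {lam k c ℓ : ℕ}

theorem sum_card_incident (D : IsFlagTransitiveDesign G I cl lam k c ℓ) {α : Ω} {T : Finset Bl}
    {S : Finset Ω} (hα : α ∉ S) (hT : ∀ B ∈ T, I α B)
    (hTS : ∀ B, I α B → ∀ s ∈ S, I s B → B ∈ T) :
    ∑ B ∈ T, #{s ∈ S | I s B} = lam * #S := by
  have h := sum_card_bipartiteAbove_eq_sum_card_bipartiteBelow (s := S) (t := T) I
  simp only [bipartiteAbove, bipartiteBelow] at h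
  rw [← h, mul_comm]
  refine sum_const_nat fun s hs => ?_
  rw [← D.card_pair α s (fun h => hα (h ▸ hs))]
  congr 1
  ext B
  simp only [mem_filter, mem_univ, true_and]
  exact ⟨fun h => ⟨hT B h.1, h.2⟩, fun h => ⟨hTS B h.1 s hs h.2, h.2⟩⟩

theorem card_through_mul (D : IsFlagTransitiveDesign G I cl lam k c ℓ) (α : Ω) :
    #{B | I α B} * (k - 1) = lam * (Fintype.card Ω - 1) := by
  have h := D.sum_card_incident (α := α) (T := {B | I α B}) (S := univ.erase α) (by simp)
    (by simp) (fun B hB _ _ _ => by simpa using hB)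
  rw [card_erase_of_mem (mem_univ _), card_univ] at h
  rw [← h]
  symm
  refine sum_const_nat fun B hB => ?_
  rw [filter_erase, card_erase_of_mem, D.card_block]
  simpa using hB

theorem incident_smul_iff (D : IsFlagTransitiveDesign G I cl lam k c ℓ) {g : G} {B : Bl}
    (hB : g • B = B) {x : Ω} : I (g • x) B ↔ I x B := by
  refine ⟨fun h => ?_, fun h => ?_⟩
  · have := D.smul_incident g⁻¹ _ _ h
    rwa [inv_smul_smul, inv_smul_eq_iff.mpr hB.symm] at this
  · have := D.smul_incident g _ _ h
    rwa [hB] at this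

theorem card_through_dvd (D : IsFlagTransitiveDesign G I cl lam k c ℓ) {α : Ω} {S : Finset Ω}
    (hα : α ∉ S) (hS : ∀ g : G, g • α = α → ∀ s ∈ S, g • s ∈ S) :
    #{B | I α B} ∣ lam * #S := by
  rw [← D.sum_card_incident (T := {B | I α B}) hα (by simp)
    fun B hB _ _ _ => by simpa using hB]
  have hle : ∀ B B', I α B → I α B' → #{s ∈ S | I s B} ≤ #{s ∈ S | I s B'} := by
    intro B B' hB hB'
    obtain ⟨g, hg, hgB⟩ := D.exists_flag_smul α α B B' hB hB'
    refine card_le_card_of_injOn (g • ·) (fun s hs => ?_) (MulAction.injective g).injOn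
    simp only [coe_filter, Set.mem_ofPred_eq] at hs ⊢
    exact ⟨hS g hg s hs.1, hgB ▸ D.smul_incident g s B hs.2⟩
  rcases ({B | I α B} : Finset Bl).eq_empty_or_nonempty with h | ⟨B₀, hB₀⟩
  · rw [h]; simp
  · rw [mem_filter] at hB₀
    refine Dvd.intro (#{s ∈ S | I s B₀}) (Eq.symm (sum_const_nat fun B hB => ?_))
    rw [mem_filter] at hB
    exact le_antisymm (hle _ _ hB.2 hB₀.2) (hle _ _ hB₀.2 hB.2)

theorem card_filter_class_mem (D : IsFlagTransitiveDesign G I cl lam k c ℓ) (S : Finset C) :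
    #{x | cl x ∈ S} = c * #S := by
  rw [card_eq_sum_card_fiberwise (t := S) (f := cl) (fun x hx => by simpa using hx), mul_comm]
  refine sum_const_nat fun Δ hΔ => ?_
  rw [← D.card_class Δ]
  congr 1
  ext x
  simp only [mem_filter, mem_univ, true_and]
  exact ⟨fun h => h.2, fun h => ⟨h ▸ hΔ, h⟩⟩

theorem card_points (D : IsFlagTransitiveDesign G I cl lam k c ℓ) :
    Fintype.card Ω = c * Fintype.card C := by
  simpa using D.card_filter_class_mem univ

theorem card_through_dvd_of_classes (D : IsFlagTransitiveDesign G I cl lam k c ℓ) {α : Ω}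
    {S : Finset C} (hα : cl α ∉ S) (hS : ∀ g : G, g • cl α = cl α → ∀ Δ ∈ S, g • Δ ∈ S) :
    #{B | I α B} ∣ lam * (c * #S) := by
  rw [← D.card_filter_class_mem]
  refine D.card_through_dvd (by simpa using hα) fun g hg s hs => ?_
  simp only [mem_filter, mem_univ, true_and] at hs ⊢
  rw [D.class_smul]
  exact hS g (by rw [← D.class_smul, hg]) _ hs

theorem exists_mem_class (D : IsFlagTransitiveDesign G I cl lam k c ℓ) (Δ : C) :
    ∃ x, cl x = Δ := by
  have h := D.card_class Δ
  have h2 := D.two_le_c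
  obtain ⟨x, hx⟩ := card_pos.mp (by omega : 0 < #{x | cl x = Δ})
  exact ⟨x, by simpa using hx⟩

theorem exists_incident_incident (D : IsFlagTransitiveDesign G I cl lam k c ℓ) {x y : Ω}
    (h : x ≠ y) : ∃ B, I x B ∧ I y B := by
  have h1 := D.card_pair x y h
  have h2 := D.one_le_lam
  obtain ⟨B, hB⟩ := card_pos.mp (by omega : 0 < #{B | I x B ∧ I y B})
  exact ⟨B, by simpa using hB⟩

theorem exists_incident (D : IsFlagTransitiveDesign G I cl lam k c ℓ) (x : Ω) : ∃ B, I x B := by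
  have h1 := D.card_class (cl x)
  have h2 := D.two_le_c
  obtain ⟨y, -, hy⟩ := exists_mem_ne (by omega : 1 < #{y | cl y = cl x}) x
  obtain ⟨B, hB⟩ := D.exists_incident_incident hy
  exact ⟨B, hB.2⟩

theorem isPretransitive_points (D : IsFlagTransitiveDesign G I cl lam k c ℓ) :
    IsPretransitive G Ω := by
  refine ⟨fun x y => ?_⟩
  obtain ⟨B, hB⟩ := D.exists_incident x
  obtain ⟨B', hB'⟩ := D.exists_incident y
  obtain ⟨g, hg, -⟩ := D.exists_flag_smul x y B B' hB hB'
  exact ⟨g, hg⟩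

theorem isPretransitive_classes (D : IsFlagTransitiveDesign G I cl lam k c ℓ) :
    IsPretransitive G C := by
  have := D.isPretransitive_points
  refine ⟨fun Δ Δ' => ?_⟩
  obtain ⟨x, rfl⟩ := D.exists_mem_class Δ
  obtain ⟨y, rfl⟩ := D.exists_mem_class Δ'
  obtain ⟨g, rfl⟩ := exists_smul_eq G x y
  exact ⟨g, (D.class_smul g x).symm⟩

theorem isPreprimitive_classes (D : IsFlagTransitiveDesign G I cl lam k c ℓ) (α : Ω)
    (h : ∀ m, 0 < m → m ∣ Fintype.card C → #{B | I α B} ∣ lam * (c * (m - 1)) →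
      m = 1 ∨ m = Fintype.card C) : IsPreprimitive G C := by
  have := D.isPretransitive_classes
  refine IsPreprimitive.of_isTrivialBlock_base (cl α) fun {X} hX hXb => ?_
  have hdvd := hXb.ncard_dvd_card ⟨_, hX⟩
  rw [Nat.card_eq_fintype_card] at hdvd
  have hpos : 0 < X.ncard := (Set.ncard_pos (Set.toFinite X)).mpr ⟨_, hX⟩
  have hr := D.card_through_dvd_of_classes (α := α) (S := X.toFinset.erase (cl α)) (by simp) (by
    intro g hg Δ hΔ
    rw [mem_erase, Set.mem_toFinset] at hΔ ⊢
    refine ⟨fun h => hΔ.1 (smul_left_cancel g (h.trans hg.symm)), ?_⟩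
    have hgX : g • X = X := hXb.smul_eq_of_mem hX (hg.symm ▸ hX)
    exact hgX ▸ Set.smul_mem_smul_set hΔ.2)
  rw [card_erase_of_mem (by simpa using hX), ← Set.ncard_eq_toFinset_card'] at hr
  rcases h _ hpos hdvd hr with h | h
  · left
    exact Set.ncard_le_one_iff_subsingleton.mp h.le
  · right
    exact Set.eq_univ_iff_ncard X |>.mpr (by rw [h, Nat.card_eq_fintype_card])

/-- The stabilizer of a class acts on the points of the class. -/
def classSubMulAction (D : IsFlagTransitiveDesign G I cl lam k c ℓ) (Δ : C) :
    SubMulAction (stabilizer G Δ) Ω where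
  carrier := {x | cl x = Δ}
  smul_mem' g x hx := by
    change cl (g.1 • x) = Δ
    rw [D.class_smul, hx]
    exact g.2

theorem mem_classSubMulAction (D : IsFlagTransitiveDesign G I cl lam k c ℓ) {Δ : C} {x : Ω} :
    x ∈ D.classSubMulAction Δ ↔ cl x = Δ := Iff.rfl

theorem card_classSubMulAction (D : IsFlagTransitiveDesign G I cl lam k c ℓ) (Δ : C) :
    Fintype.card (D.classSubMulAction Δ) = c := by
  refine Eq.trans ?_ (D.card_class Δ)
  rw [← Fintype.card_subtype]
  exact Fintype.card_congr (Equiv.subtypeEquivRight fun x => D.mem_classSubMulAction)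

theorem isPretransitive_classSubMulAction (D : IsFlagTransitiveDesign G I cl lam k c ℓ) (Δ : C) :
    IsPretransitive (stabilizer G Δ) (D.classSubMulAction Δ) := by
  have := D.isPretransitive_points
  refine ⟨fun x y => ?_⟩
  obtain ⟨g, hg⟩ := exists_smul_eq G x.1 y.1
  have hx : cl x.1 = Δ := x.2
  have hy : cl y.1 = Δ := y.2
  have hgΔ : g • Δ = Δ :=
    calc g • Δ = cl (g • x.1) := by rw [D.class_smul, hx]
      _ = Δ := by rw [hg, hy]
  exact ⟨⟨g, hgΔ⟩, Subtype.ext hg⟩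

theorem isPreprimitive_classSubMulAction (D : IsFlagTransitiveDesign G I cl lam k c ℓ) (α : Ω)
    (h : ∀ m, 0 < m → m ∣ c → #{B | I α B} ∣ lam * (m - 1) → m = 1 ∨ m = c) :
    IsPreprimitive (stabilizer G (cl α)) (D.classSubMulAction (cl α)) := by
  have := D.isPretransitive_classSubMulAction (cl α)
  let a : D.classSubMulAction (cl α) := ⟨α, rfl⟩
  refine IsPreprimitive.of_isTrivialBlock_base a fun {X} hX hXb => ?_
  have hdvd := hXb.ncard_dvd_card ⟨_, hX⟩
  rw [Nat.card_eq_fintype_card, D.card_classSubMulAction] at hdvd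
  have hpos : 0 < X.ncard := (Set.ncard_pos (Set.toFinite X)).mpr ⟨_, hX⟩
  have hr := D.card_through_dvd (α := α)
    (S := (X.toFinset.erase a).map (Function.Embedding.subtype _)) (by simp [a]) (by
    intro g hg x hx
    obtain ⟨y, hy, rfl⟩ := mem_map.mp hx
    rw [mem_erase, Set.mem_toFinset] at hy
    have hgΔ : g • cl α = cl α := by rw [← D.class_smul, hg]
    let g' : stabilizer G (cl α) := ⟨g, hgΔ⟩
    have hga : g' • a = a := Subtype.ext hg
    have hgX : g' • X = X := hXb.smul_eq_of_mem hX (hga.symm ▸ hX)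
    refine mem_map.mpr ⟨g' • y, ?_, rfl⟩
    rw [mem_erase, Set.mem_toFinset]
    exact ⟨fun h => hy.1 (smul_left_cancel g' (h.trans hga.symm)),
      hgX ▸ Set.smul_mem_smul_set hy.2⟩)
  rw [card_map, card_erase_of_mem (by simpa using hX), ← Set.ncard_eq_toFinset_card'] at hr
  rcases h _ hpos hdvd hr with h | h
  · left
    exact Set.ncard_le_one_iff_subsingleton.mp h.le
  · right
    rw [Set.eq_univ_iff_ncard]
    rw [h, Nat.card_eq_fintype_card, D.card_classSubMulAction]

theorem dvd_card_stabilizer_class (D : IsFlagTransitiveDesign G I cl lam k c ℓ) (Δ : C) :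
    c ∣ Nat.card (stabilizer G Δ) := by
  have := D.isPretransitive_classSubMulAction Δ
  obtain ⟨x, hx⟩ := D.exists_mem_class Δ
  have h := card_mul_card_stabilizer (G := stabilizer G Δ) (⟨x, hx⟩ : D.classSubMulAction Δ)
  rw [D.card_classSubMulAction] at h
  exact Dvd.intro _ h

theorem smul_block_eq (D : IsFlagTransitiveDesign G I cl lam k c ℓ) {p : ℕ} (hp : p.Prime)
    (hlam : lam < p) {g : G} (hg : g ^ p = 1) {α β : Ω} (hne : α ≠ β) (hα : g • α = α)
    (hβ : g • β = β) {B : Bl} (hαB : I α B) (hβB : I β B) : g • B = B := by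
  refine smul_eq_of_card_lt hp hg (S := {B | I α B ∧ I β B}) (fun B hB => ?_)
    (by rwa [D.card_pair α β hne]) B (by simp [hαB, hβB])
  simp only [mem_filter, mem_univ, true_and] at hB ⊢
  have h1 := D.smul_incident g α B hB.1
  have h2 := D.smul_incident g β B hB.2
  rw [hα] at h1
  rw [hβ] at h2
  exact ⟨h1, h2⟩

theorem smul_eq_of_smul_class_eq (D : IsFlagTransitiveDesign G I cl lam k c ℓ) {p : ℕ}
    (hp : p.Prime) (hl : ℓ < p) {g : G} (hg : g ^ p = 1) {B : Bl} (hB : g • B = B) {x : Ω}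
    (hx : I x B) (hcl : g • cl x = cl x) : g • x = x := by
  refine smul_eq_of_card_lt hp hg (S := {y | I y B ∧ cl y = cl x}) (fun y hy => ?_)
    (by rwa [D.card_inter x B hx]) x (by simp [hx])
  simp only [mem_filter, mem_univ, true_and] at hy ⊢
  exact ⟨(D.incident_smul_iff hB).mpr hy.1, by rw [D.class_smul, hy.2, hcl]⟩

theorem card_meeting_mul (D : IsFlagTransitiveDesign G I cl lam k c ℓ) {γ : Ω} {Δ : C}
    (hγ : cl γ ≠ Δ) : #{B | I γ B ∧ ∃ x, cl x = Δ ∧ I x B} * ℓ = lam * c := by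
  have h := D.sum_card_incident (α := γ) (T := {B | I γ B ∧ ∃ x, cl x = Δ ∧ I x B})
    (S := {x | cl x = Δ}) (by simpa using hγ) (fun B hB => by simp at hB; exact hB.1)
    (fun B hB s hs hsB => by
      simp only [mem_filter, mem_univ, true_and] at hs ⊢
      exact ⟨hB, s, hs, hsB⟩)
  rw [D.card_class Δ] at h
  rw [← h]
  symm
  refine sum_const_nat fun B hB => ?_
  simp only [mem_filter, mem_univ, true_and] at hB
  obtain ⟨-, x, rfl, hx⟩ := hB
  rw [filter_filter, ← D.card_inter x B hx]
  congr 1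
  ext y
  simp only [mem_filter, mem_univ, true_and]
  exact and_comm

theorem exists_ne_incident (D : IsFlagTransitiveDesign G I cl lam k c ℓ) {x : Ω} {B : Bl}
    (hx : I x B) : ∃ y, y ≠ x ∧ I y B ∧ cl y = cl x := by
  have h1 := D.card_inter x B hx
  have h2 := D.two_le_l
  obtain ⟨y, hy, hyx⟩ := exists_mem_ne (by omega : 1 < #{y | I y B ∧ cl y = cl x}) x
  exact ⟨y, hyx, by simpa using hy⟩

theorem eq_one_of_smul_eq_on_class (D : IsFlagTransitiveDesign G I cl lam k c ℓ) {p : ℕ}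
    (hp : p.Prime) (hlam : lam < p) (hlc : ℓ < c) {g : G} (hg : g ^ p = 1) {Δ : C}
    (hΔ : ∀ x, cl x = Δ → g • x = x) : g = 1 := by
  refine D.faithful g fun γ => ?_
  by_cases hγ : cl γ = Δ
  · exact hΔ γ hγ
  by_contra hne
  have h1 := D.card_meeting_mul hγ
  have hle : #{B | I γ B ∧ ∃ x, cl x = Δ ∧ I x B} ≤ lam := by
    rw [← D.card_pair (g • γ) γ hne]
    refine card_le_card fun B hB => ?_
    simp only [mem_filter, mem_univ, true_and] at hB ⊢
    obtain ⟨hγB, x, hx, hxB⟩ := hB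
    obtain ⟨y, hyx, hyB, hy⟩ := D.exists_ne_incident hxB
    have hgB := D.smul_block_eq hp hlam hg hyx (hΔ y (hy.trans hx)) (hΔ x hx) hyB hxB
    exact ⟨(D.incident_smul_iff hgB).mpr hγB, hγB⟩
  have h2 : lam * c ≤ lam * ℓ := h1 ▸ Nat.mul_le_mul_right ℓ hle
  have := Nat.le_of_mul_le_mul_left h2 D.one_le_lam
  omega

theorem card_incident_class_mem (D : IsFlagTransitiveDesign G I cl lam k c ℓ) (B : Bl)
    (S : Finset C) :
    #{x | I x B ∧ cl x ∈ S} = ℓ * #{Δ ∈ S | ∃ x, cl x = Δ ∧ I x B} := by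
  rw [card_eq_sum_card_fiberwise (t := {Δ ∈ S | ∃ x, cl x = Δ ∧ I x B}) (f := cl), mul_comm]
  · refine sum_const_nat fun Δ hΔ => ?_
    simp only [mem_filter] at hΔ
    obtain ⟨hΔ, x, rfl, hx⟩ := hΔ
    rw [← D.card_inter x B hx]
    congr 1
    ext y
    simp only [mem_filter, mem_univ, true_and]
    exact ⟨fun h => ⟨h.1.1, h.2⟩, fun h => ⟨⟨h.1, h.2 ▸ hΔ⟩, h.2⟩⟩
  · intro x hx
    simp only [coe_filter, mem_univ, true_and, Set.mem_ofPred_eq] at hx ⊢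
    exact ⟨hx.2, x, rfl, hx.1⟩

theorem card_classes_meeting (D : IsFlagTransitiveDesign G I cl lam k c ℓ) (B : Bl) :
    ℓ * #{Δ | ∃ x, cl x = Δ ∧ I x B} = k := by
  rw [← D.card_incident_class_mem B univ, ← D.card_block B]
  congr 1
  ext x
  simp

theorem smul_mem_classes_meeting (D : IsFlagTransitiveDesign G I cl lam k c ℓ) {g : G} {B : Bl}
    (hB : g • B = B) : ∀ Δ ∈ ({Δ | ∃ x, cl x = Δ ∧ I x B} : Finset C),
      g • Δ ∈ ({Δ | ∃ x, cl x = Δ ∧ I x B} : Finset C) := by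
  intro Δ hΔ
  simp only [mem_filter, mem_univ, true_and] at hΔ ⊢
  obtain ⟨x, rfl, hx⟩ := hΔ
  exact ⟨g • x, D.class_smul g x, (D.incident_smul_iff hB).mpr hx⟩

theorem card_fixed_classes_meeting_modEq (D : IsFlagTransitiveDesign G I cl lam k c ℓ) {p m : ℕ}
    (hp : p.Prime) {g : G} (hg : g ^ p = 1) {B : Bl} (hB : g • B = B) (hm : ℓ * m = k) :
    m ≡ #{Δ | g • Δ = Δ ∧ ∃ x, cl x = Δ ∧ I x B} [MOD p] := by
  have h := card_filter_fixed_modEq hp (D.smul_mem_classes_meeting hB)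
    (fun _ _ => by rw [hg, one_smul])
  have hm' : m = #{Δ | ∃ x, cl x = Δ ∧ I x B} := by
    have := D.two_le_l
    exact Nat.eq_of_mul_eq_mul_left (by omega) (hm.trans (D.card_classes_meeting B).symm)
  rw [filter_filter, ← hm'] at h
  simpa only [and_comm] using h

theorem card_fixed_class_modEq (D : IsFlagTransitiveDesign G I cl lam k c ℓ) {p : ℕ}
    (hp : p.Prime) {g : G} (hg : g ^ p = 1) {Δ : C} (hΔ : g • Δ = Δ) :
    c ≡ #{x | g • x = x ∧ cl x = Δ} [MOD p] := by
  have h := card_filter_fixed_modEq hp (g := g) (S := {x | cl x = Δ}) (fun x hx => by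
    simp only [mem_filter, mem_univ, true_and] at hx ⊢
    rw [D.class_smul, hx, hΔ]) (fun _ _ => by rw [hg, one_smul])
  rw [filter_filter, D.card_class] at h
  simpa only [and_comm] using h

theorem card_fixed_blocks_mul (D : IsFlagTransitiveDesign G I cl lam k c ℓ) {p : ℕ}
    (hp : p.Prime) (hlam : lam < p) (hl : ℓ < p) {g : G} (hg : g ^ p = 1) {α : Ω}
    (hα : g • α = α) :
    #{B | I α B ∧ g • B = B} * (ℓ - 1) = lam * (#{x | g • x = x ∧ cl x = cl α} - 1) := by
  have h := D.sum_card_incident (α := α) (T := {B | I α B ∧ g • B = B})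
    (S := ({x | g • x = x ∧ cl x = cl α} : Finset Ω).erase α) (by simp)
    (fun B hB => by simp at hB; exact hB.1) (fun B hB s hs hsB => by
      simp only [mem_erase, mem_filter, mem_univ, true_and] at hs ⊢
      exact ⟨hB, D.smul_block_eq hp hlam hg hs.1 hs.2.1 hα hsB hB⟩)
  rw [card_erase_of_mem (by simp [hα])] at h
  rw [← h]
  symm
  refine sum_const_nat fun B hB => ?_
  simp only [mem_filter, mem_univ, true_and] at hB
  rw [filter_erase, card_erase_of_mem (by simp [hα, hB.1]), ← D.card_inter α B hB.1, filter_filter]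
  congr 2
  ext y
  simp only [mem_filter, mem_univ, true_and]
  refine ⟨fun h => ⟨h.2, h.1.2⟩, fun h => ⟨⟨?_, h.2⟩, h.1⟩⟩
  refine D.smul_eq_of_smul_class_eq hp hl hg hB.2 h.1 ?_
  rw [h.2, ← D.class_smul, hα]

theorem card_fixed_incident (D : IsFlagTransitiveDesign G I cl lam k c ℓ) {p : ℕ}
    (hp : p.Prime) (hl : ℓ < p) {g : G} (hg : g ^ p = 1) {B : Bl} (hB : g • B = B) :
    #{x | g • x = x ∧ I x B} = ℓ * #{Δ | g • Δ = Δ ∧ ∃ x, cl x = Δ ∧ I x B} := by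
  have h := D.card_incident_class_mem B {Δ | g • Δ = Δ}
  rw [filter_filter] at h
  rw [← h]
  congr 1
  ext x
  simp only [mem_filter, mem_univ, true_and]
  exact ⟨fun h => ⟨h.2, by rw [← D.class_smul, h.1]⟩,
    fun h => ⟨D.smul_eq_of_smul_class_eq hp hl hg hB h.1 h.2, h.1⟩⟩

theorem sum_fixed_blocks (D : IsFlagTransitiveDesign G I cl lam k c ℓ) {p : ℕ}
    (hp : p.Prime) (hlam : lam < p) (hl : ℓ < p) {g : G} (hg : g ^ p = 1) {α : Ω}
    (hα : g • α = α) :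
    ∑ B ∈ {B | I α B ∧ g • B = B}, (ℓ * #{Δ | g • Δ = Δ ∧ ∃ x, cl x = Δ ∧ I x B} - 1) =
      lam * (#{x : Ω | g • x = x} - 1) := by
  have h := D.sum_card_incident (α := α) (T := {B | I α B ∧ g • B = B})
    (S := ({x | g • x = x} : Finset Ω).erase α) (by simp)
    (fun B hB => by simp at hB; exact hB.1) (fun B hB s hs hsB => by
      simp only [mem_erase, mem_filter, mem_univ, true_and] at hs ⊢
      exact ⟨hB, D.smul_block_eq hp hlam hg hs.1 hs.2 hα hsB hB⟩)
  rw [card_erase_of_mem (by simp [hα])] at h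
  rw [← h]
  refine sum_congr rfl fun B hB => ?_
  simp only [mem_filter, mem_univ, true_and] at hB
  rw [filter_erase, card_erase_of_mem (by simp [hα, hB.1]), filter_filter,
    D.card_fixed_incident hp hl hg hB.2]

theorem card_fixed_points (D : IsFlagTransitiveDesign G I cl lam k c ℓ) {g : G} {s : ℕ}
    (hs : ∀ Δ, g • Δ = Δ → #{x | g • x = x ∧ cl x = Δ} = s) :
    #{x : Ω | g • x = x} = s * #{Δ : C | g • Δ = Δ} := by
  rw [card_eq_sum_card_fiberwise (t := {Δ : C | g • Δ = Δ}) (f := cl), mul_comm]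
  · refine sum_const_nat fun Δ hΔ => ?_
    rw [filter_filter]
    exact hs Δ (by simpa using hΔ)
  · intro x hx
    simp only [coe_filter, mem_univ, true_and, Set.mem_ofPred_eq] at hx ⊢
    rw [← D.class_smul, hx]

/-- The kernel of the action on the classes acts faithfully on each class if the parameters leave no
room for a nontrivial orbit whose length has only prime divisors at most `lam`. -/
theorem eq_one_of_smul_class_eq_of_smul_eq [Finite G]
    (D : IsFlagTransitiveDesign G I cl lam k c ℓ) (hlc : ℓ < c) {r : ℕ}
    (hr : ∀ α, #{B | I α B} = r) (hnum : ∀ m, 0 < m → m ≤ c → r ∣ lam * (m - 1) →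
      (∀ p : ℕ, p.Prime → p ∣ m → p ≤ lam) → m = 1)
    {Δ : C} {g : G} (hgC : ∀ Δ' : C, g • Δ' = Δ') (hg : ∀ x, cl x = Δ → g • x = x) : g = 1 := by
  let K : Subgroup G := (toPermHom G C).ker
  have hKC : ∀ (x : K) (Δ' : C), x.1 • Δ' = Δ' := fun x Δ' => Equiv.Perm.congr_fun x.2 Δ'
  let N : Subgroup K :=
    { carrier := {a | ∀ x, cl x = Δ → a.1 • x = x}
      one_mem' := fun x _ => one_smul G x
      mul_mem' := fun {a b} ha hb x hx => by
        rw [Subgroup.coe_mul, mul_smul, hb x hx, ha x hx]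
      inv_mem' := fun {a} ha x hx => by
        rw [Subgroup.coe_inv, inv_smul_eq_iff, ha x hx] }
  have hN : N.Normal := by
    refine ⟨fun a ha b x hx => ?_⟩
    have h := ha (b⁻¹.1 • x) (by rw [D.class_smul, hKC, hx])
    change (b.1 * a.1 * b.1⁻¹) • x = x
    rw [mul_smul, mul_smul, ← eq_inv_smul_iff]
    exact h
  obtain ⟨M, hNM, hconj, hprime⟩ := exists_normal_ge_of_normal K N hN
  have hMp : ∀ p : ℕ, p.Prime → p ∣ Nat.card M → p ≤ lam := by
    intro p hp hdvd
    by_contra! hlam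
    obtain ⟨a, ha1, hap⟩ := exists_pow_eq_one_of_dvd hp (hprime p hp hdvd)
    refine ha1 (Subtype.ext (Subtype.ext ?_))
    exact D.eq_one_of_smul_eq_on_class hp hlam hlc
      (congrArg (fun z : N => z.1.1) hap) (fun x hx => a.2 x hx)
  have htriv : ∀ α : Ω, orbit M α = {α} := by
    intro α
    have hα : α ∈ orbit M α := mem_orbit_self α
    have hpos : 0 < (orbit M α).ncard := (Set.ncard_pos (Set.toFinite _)).mpr ⟨α, hα⟩
    have hle : (orbit M α).ncard ≤ c := by
      rw [← D.card_class (cl α), Set.ncard_eq_toFinset_card']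
      refine card_le_card fun x hx => ?_
      obtain ⟨a, rfl⟩ := Set.mem_toFinset.mp hx
      rw [mem_filter]
      exact ⟨mem_univ _, (D.class_smul a.1.1 α).trans (hKC a.1 _)⟩
    have hdvd := D.card_through_dvd (α := α) (S := (orbit M α).toFinset.erase α) (by simp) (by
      intro b hb x hx
      rw [mem_erase, Set.mem_toFinset] at hx ⊢
      refine ⟨fun h => hx.1 (smul_left_cancel b (h.trans hb.symm)), ?_⟩
      obtain ⟨a, ha⟩ := hx.2
      refine ⟨⟨_, hconj b a.1 a.2⟩, ?_⟩
      change (MulAut.conjNormal b a.1).1 • α = b • x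
      rw [MulAut.conjNormal_apply, mul_smul, inv_smul_eq_iff.mpr hb.symm, mul_smul, ← ha]
      rfl)
    rw [card_erase_of_mem (by simp), ← Set.ncard_eq_toFinset_card', hr] at hdvd
    have hcard : (orbit M α).ncard ∣ Nat.card M := by
      rw [← index_stabilizer]
      exact Subgroup.index_dvd_card _
    obtain ⟨y, hy⟩ := Set.ncard_eq_one.mp
      (hnum _ hpos hle hdvd fun p hp h => hMp p hp (h.trans hcard))
    rw [hy] at hα ⊢
    rw [Set.mem_singleton_iff.mp hα]
  have hgK : g ∈ K := Equiv.Perm.ext hgC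
  have hgN : (⟨g, hgK⟩ : K) ∈ N := hg
  refine D.faithful g fun x => ?_
  have : (⟨⟨g, hgK⟩, hNM hgN⟩ : M) • x ∈ orbit M x := mem_orbit x _
  rw [htriv] at this
  exact this

theorem eq_one_of_card_class_lt (D : IsFlagTransitiveDesign G I cl lam k c ℓ) {p : ℕ}
    (hp : p.Prime) (hlam : lam < p) (hlc : ℓ < c) (hc : c < p) {g : G} (hg : g ^ p = 1) {Δ : C}
    (hΔ : g • Δ = Δ) : g = 1 := by
  refine D.eq_one_of_smul_eq_on_class hp hlam hlc hg (Δ := Δ) fun x hx => ?_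
  refine smul_eq_of_card_lt hp hg (S := {x | cl x = Δ}) (fun x hx => ?_)
    (by rwa [D.card_class]) x (by simpa using hx)
  simp only [mem_filter, mem_univ, true_and] at hx ⊢
  rw [D.class_smul, hx, hΔ]

/-- The case of the parameters `(3, 100, 12, 10, 10, 2)` and `(4, 100, 12, 10, 10, 2)`. -/
theorem not_faithful_of_card_hundred [Finite G] (D : IsFlagTransitiveDesign G I cl lam 12 10 2)
    (hlam : lam = 3 ∨ lam = 4) (hC : Fintype.card C = 10)
    (hK : ∀ g : G, (∀ Δ : C, g • Δ = Δ) → g = 1) : False := by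
  obtain ⟨Δ⟩ : Nonempty C := Fintype.card_pos_iff.mp (by omega)
  obtain ⟨α, rfl⟩ := D.exists_mem_class Δ
  have hprim : IsPreprimitive G C := by
    have hr := D.card_through_mul α
    rw [D.card_points, hC] at hr
    refine D.isPreprimitive_classes α fun m hm0 hm hdvd => ?_
    rw [hC] at hm ⊢
    have hm10 : m ≤ 10 := Nat.le_of_dvd (by norm_num) hm
    rcases hlam with rfl | rfl
    · have : #{B | I α B} = 27 := by omega
      rw [this] at hdvd
      interval_cases m <;> revert hm hdvd <;> decide
    · have : #{B | I α B} = 36 := by omega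
      rw [this] at hdvd
      interval_cases m <;> revert hm hdvd <;> decide
  have h5 : Nat.Prime 5 := by norm_num
  have h7 : Nat.Prime 7 := by norm_num
  obtain ⟨g, hg1, hg5, hgα⟩ := exists_smul_eq_pow_eq_one_of_dvd h5
    ((by norm_num : 5 ∣ 10).trans (D.dvd_card_stabilizer_class (cl α)))
  have hf : #{Δ : C | g • Δ = Δ} = 4 + 1 := by
    have h1 := card_fixed_modEq (X := C) h5 hg5
    have h2 := card_fixed_lt_of_faithful hK hg1
    have h3 := card_fixed_pos hgα
    rw [hC] at h1 h2
    unfold Nat.ModEq at h1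
    omega
  have hmt := isMultiplyPretransitive_of_prime_cycle hprim h5
    (fun x => by rw [hg5, one_smul]) hf (by rw [hC])
  have hdvd := descFactorial_dvd_card_of_isMultiplyPretransitive (by rw [hC]; norm_num) hmt
  rw [hC] at hdvd
  obtain ⟨y, hy1, hy7⟩ := exists_pow_eq_one_of_dvd h7
    ((by decide : 7 ∣ Nat.descFactorial 10 (4 + 2)).trans hdvd)
  have hfy : #{Δ : C | y • Δ = Δ} = 3 := by
    have h1 := card_fixed_modEq (X := C) h7 hy7
    have h2 := card_fixed_lt_of_faithful hK hy1
    rw [hC] at h1 h2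
    unfold Nat.ModEq at h1
    omega
  obtain ⟨Δ, hΔ⟩ := exists_fixed_of_card_pos (X := C) (g := y) (by omega)
  have hs := D.card_fixed_class_modEq h7 hy7 hΔ
  unfold Nat.ModEq at hs
  obtain ⟨β, hβ, γ, hγ, hne⟩ :=
    one_lt_card.mp (by omega : 1 < #{x | y • x = x ∧ cl x = Δ})
  simp only [mem_filter, mem_univ, true_and] at hβ hγ
  obtain ⟨B, hβB, hγB⟩ := D.exists_incident_incident hne
  have hB := D.smul_block_eq h7 (by omega) hy7 hne hβ.1 hγ.1 hβB hγB
  have hcard := D.card_classes_meeting B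
  have hfix := smul_eq_of_card_lt h7 hy7 (D.smul_mem_classes_meeting hB) (by omega)
  have : #{Δ | ∃ x, cl x = Δ ∧ I x B} ≤ #{Δ : C | y • Δ = Δ} :=
    card_le_card fun Δ hΔ => mem_filter.mpr ⟨mem_univ _, hfix Δ hΔ⟩
  omega

/-- The case of the parameters `(4, 231, 24, 11, 21, 2)`. -/
theorem not_faithful_of_card_two_hundred_thirty_one [Finite G]
    (D : IsFlagTransitiveDesign G I cl 4 24 11 2) (hC : Fintype.card C = 21)
    (hK : ∀ g : G, (∀ Δ : C, g • Δ = Δ) → g = 1) : False := by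
  obtain ⟨Δ⟩ : Nonempty C := Fintype.card_pos_iff.mp (by omega)
  obtain ⟨α, rfl⟩ := D.exists_mem_class Δ
  have hprim : IsPreprimitive G C := by
    have hr := D.card_through_mul α
    rw [D.card_points, hC] at hr
    refine D.isPreprimitive_classes α fun m hm0 hm hdvd => ?_
    rw [hC] at hm ⊢
    have hm21 : m ≤ 21 := Nat.le_of_dvd (by norm_num) hm
    have : #{B | I α B} = 40 := by omega
    rw [this] at hdvd
    interval_cases m <;> revert hm hdvd <;> decide
  have h11 : Nat.Prime 11 := by norm_num
  have h19 : Nat.Prime 19 := by norm_num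
  obtain ⟨g, hg1, hg11, hgα⟩ := exists_smul_eq_pow_eq_one_of_dvd h11
    (D.dvd_card_stabilizer_class (cl α))
  have hf : #{Δ : C | g • Δ = Δ} = 9 + 1 := by
    have h1 := card_fixed_modEq (X := C) h11 hg11
    have h2 := card_fixed_lt_of_faithful hK hg1
    have h3 := card_fixed_pos hgα
    rw [hC] at h1 h2
    unfold Nat.ModEq at h1
    omega
  have hmt := isMultiplyPretransitive_of_prime_cycle hprim h11
    (fun x => by rw [hg11, one_smul]) hf (by rw [hC])
  have hdvd := descFactorial_dvd_card_of_isMultiplyPretransitive (by rw [hC]; norm_num) hmt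
  rw [hC] at hdvd
  obtain ⟨y, hy1, hy19⟩ := exists_pow_eq_one_of_dvd h19
    ((by decide : 19 ∣ Nat.descFactorial 21 (9 + 2)).trans hdvd)
  have h1 := card_fixed_modEq (X := C) h19 hy19
  rw [hC] at h1
  unfold Nat.ModEq at h1
  obtain ⟨Δ, hΔ⟩ := exists_fixed_of_card_pos (X := C) (g := y) (by omega)
  exact hy1 (D.eq_one_of_card_class_lt h19 (by norm_num) (by norm_num) (by norm_num) hy19 hΔ)

theorem card_fixed_class_lt (D : IsFlagTransitiveDesign G I cl lam k c ℓ) {p : ℕ}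
    (hp : p.Prime) (hlam : lam < p) (hlc : ℓ < c) {g : G} (hg1 : g ≠ 1) (hg : g ^ p = 1) (Δ : C) :
    #{x | g • x = x ∧ cl x = Δ} < c := by
  by_contra! hle
  refine hg1 (D.eq_one_of_smul_eq_on_class hp hlam hlc hg (Δ := Δ) fun x hx => ?_)
  have hsub : ({x | g • x = x ∧ cl x = Δ} : Finset Ω) ⊆ ({x | cl x = Δ} : Finset Ω) := by
    intro x hx
    simp only [mem_filter, mem_univ, true_and] at hx ⊢
    exact hx.2
  have heq := eq_of_subset_of_card_le hsub (by rw [D.card_class]; exact hle)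
  have hmem : x ∈ ({x | g • x = x ∧ cl x = Δ} : Finset Ω) := by
    rw [heq]
    simpa using hx
  exact (mem_filter.mp hmem).2.1

theorem false_of_pow_five_eq_one_of_smul_class_eq (D : IsFlagTransitiveDesign G I cl 4 32 28 4)
    (hC : Fintype.card C = 10) (hK : ∀ g : G, (∀ Δ : C, g • Δ = Δ) → g = 1) {g : G} (hg1 : g ≠ 1)
    (hg : g ^ 5 = 1) {Δ : C} (hΔ : g • Δ = Δ) : False := by
  have h5 : Nat.Prime 5 := by norm_num
  have hf : #{Δ : C | g • Δ = Δ} = 5 := by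
    have h1 := card_fixed_modEq (X := C) h5 hg
    have h2 := card_fixed_lt_of_faithful hK hg1
    have h3 := card_fixed_pos hΔ
    rw [hC] at h1 h2
    unfold Nat.ModEq at h1
    omega
  have hs : ∀ Δ : C, g • Δ = Δ → #{x | g • x = x ∧ cl x = Δ} = 13 := by
    intro Δ hΔ
    have h1 := D.card_fixed_class_modEq h5 hg hΔ
    have h2 := D.card_fixed_class_lt h5 (by norm_num) (by norm_num) hg1 hg Δ
    unfold Nat.ModEq at h1
    obtain ⟨α, hα⟩ := card_pos.mp (by omega : 0 < #{x | g • x = x ∧ cl x = Δ})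
    simp only [mem_filter, mem_univ, true_and] at hα
    obtain ⟨hα, rfl⟩ := hα
    have h3 := D.card_fixed_blocks_mul h5 (by norm_num) (by norm_num) hg hα
    omega
  have hu := D.card_fixed_points hs
  rw [hf] at hu
  obtain ⟨α, hα⟩ := exists_fixed_of_card_pos (X := Ω) (g := g) (by omega)
  have hT := D.card_fixed_blocks_mul h5 (by norm_num) (by norm_num) hg hα
  rw [hs (cl α) (by rw [← D.class_smul, hα])] at hT
  have hsum := D.sum_fixed_blocks h5 (by norm_num) (by norm_num) hg hα
  rw [hu, sum_const_nat (m := 11)] at hsum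
  · omega
  · intro B hB
    simp only [mem_filter, mem_univ, true_and] at hB
    have h1 := D.card_fixed_classes_meeting_modEq h5 hg hB.2 (m := 8) (by norm_num)
    have h2 : #{Δ | g • Δ = Δ ∧ ∃ x, cl x = Δ ∧ I x B} ≤ #{Δ : C | g • Δ = Δ} :=
      card_le_card fun Δ hΔ => by
        simp only [mem_filter, mem_univ, true_and] at hΔ ⊢
        exact hΔ.1
    unfold Nat.ModEq at h1
    omega

/-- The case of the parameters `(4, 280, 32, 28, 10, 4)`. -/
theorem not_faithful_of_ten_classes [Finite G] (D : IsFlagTransitiveDesign G I cl 4 32 28 4)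
    (hC : Fintype.card C = 10) (hK : ∀ g : G, (∀ Δ : C, g • Δ = Δ) → g = 1) : False := by
  obtain ⟨Δ⟩ : Nonempty C := Fintype.card_pos_iff.mp (by omega)
  obtain ⟨α, rfl⟩ := D.exists_mem_class Δ
  have hprim : IsPreprimitive G C := by
    have hr := D.card_through_mul α
    rw [D.card_points, hC] at hr
    refine D.isPreprimitive_classes α fun m hm0 hm hdvd => ?_
    rw [hC] at hm ⊢
    have hm10 : m ≤ 10 := Nat.le_of_dvd (by norm_num) hm
    have : #{B | I α B} = 36 := by omega
    rw [this] at hdvd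
    interval_cases m <;> revert hm hdvd <;> decide
  have h7 : Nat.Prime 7 := by norm_num
  obtain ⟨g, hg1, hg7, hgα⟩ := exists_smul_eq_pow_eq_one_of_dvd h7
    ((by norm_num : 7 ∣ 28).trans (D.dvd_card_stabilizer_class (cl α)))
  have hf : #{Δ : C | g • Δ = Δ} = 2 + 1 := by
    have h1 := card_fixed_modEq (X := C) h7 hg7
    have h2 := card_fixed_lt_of_faithful hK hg1
    have h3 := card_fixed_pos hgα
    rw [hC] at h1 h2
    unfold Nat.ModEq at h1
    omega
  have hmt4 := isMultiplyPretransitive_of_prime_cycle hprim h7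
    (fun x => by rw [hg7, one_smul]) hf (by rw [hC])
  have hmt3 : IsMultiplyPretransitive G C 3 :=
    isMultiplyPretransitive_of_le' (n := 2 + 2) (by norm_num) (by
      rw [ENat.card_eq_coe_fintype_card, hC]; norm_num)
  have h49 : ¬ 7 ^ 2 ∣ Nat.card G := by
    intro h
    have := h.trans (card_dvd_factorial_of_faithful hK)
    rw [hC] at this
    revert this
    decide
  obtain ⟨z, hz3, hz⟩ := exists_threeCycle_of_fixed_eq_three hmt3 hC hg1 hg7 h49 hf
  have hmt8 := isMultiplyPretransitive_of_prime_cycle hprim Nat.prime_three hz3 (f := 6) hz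
    (by rw [hC])
  have hdvd := descFactorial_dvd_card_of_isMultiplyPretransitive (by rw [hC]; norm_num) hmt8
  have := D.isPretransitive_classes
  rw [← card_mul_card_stabilizer (G := G) (cl α), hC] at hdvd
  have h5dvd : 5 ∣ Nat.card (stabilizer G (cl α)) := by
    refine Nat.dvd_of_mul_dvd_mul_left (by norm_num : 0 < 10) (Dvd.dvd.trans ?_ hdvd)
    decide
  obtain ⟨y, hy1, hy5, hyα⟩ := exists_smul_eq_pow_eq_one_of_dvd (by norm_num : Nat.Prime 5) h5dvd
  exact D.false_of_pow_five_eq_one_of_smul_class_eq hC hK hy1 hy5 hyα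

theorem false_of_pow_seven_eq_one_of_smul_class_eq (D : IsFlagTransitiveDesign G I cl 4 32 10 2)
    (hC : Fintype.card C = 28) (hK : ∀ g : G, (∀ Δ : C, g • Δ = Δ) → g = 1) {g : G} (hg1 : g ≠ 1)
    (hg : g ^ 7 = 1) {Δ : C} (hΔ : g • Δ = Δ) : False := by
  have h7 : Nat.Prime 7 := by norm_num
  have hf : #{Δ : C | g • Δ = Δ} = 7 ∨ #{Δ : C | g • Δ = Δ} = 14 ∨ #{Δ : C | g • Δ = Δ} = 21 := by
    have h1 := card_fixed_modEq (X := C) h7 hg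
    have h2 := card_fixed_lt_of_faithful hK hg1
    have h3 := card_fixed_pos hΔ
    rw [hC] at h1 h2
    unfold Nat.ModEq at h1
    omega
  have hs : ∀ Δ : C, g • Δ = Δ → #{x | g • x = x ∧ cl x = Δ} = 3 := by
    intro Δ hΔ
    have h1 := D.card_fixed_class_modEq h7 hg hΔ
    have h2 := D.card_fixed_class_lt h7 (by norm_num) (by norm_num) hg1 hg Δ
    unfold Nat.ModEq at h1
    omega
  have hu := D.card_fixed_points hs
  have hT : ∀ α : Ω, g • α = α → #{B | I α B ∧ g • B = B} = 8 := by
    intro α hα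
    have h := D.card_fixed_blocks_mul h7 (by norm_num) (by norm_num) hg hα
    rw [hs (cl α) (by rw [← D.class_smul, hα])] at h
    omega
  have hm : ∀ B, g • B = B → #{Δ | g • Δ = Δ ∧ ∃ x, cl x = Δ ∧ I x B} % 7 = 2 ∧
      #{Δ | g • Δ = Δ ∧ ∃ x, cl x = Δ ∧ I x B} ≤ #{Δ : C | g • Δ = Δ} ∧
      #{Δ | g • Δ = Δ ∧ ∃ x, cl x = Δ ∧ I x B} ≤ 16 := by
    intro B hB
    have h1 := D.card_fixed_classes_meeting_modEq h7 hg hB (m := 16) (by norm_num)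
    have h2 : #{Δ | g • Δ = Δ ∧ ∃ x, cl x = Δ ∧ I x B} ≤ #{Δ : C | g • Δ = Δ} :=
      card_le_card fun Δ hΔ => by
        simp only [mem_filter, mem_univ, true_and] at hΔ ⊢
        exact hΔ.1
    have h3 : #{Δ | g • Δ = Δ ∧ ∃ x, cl x = Δ ∧ I x B} ≤ #{Δ | ∃ x, cl x = Δ ∧ I x B} :=
      card_le_card fun Δ hΔ => by
        simp only [mem_filter, mem_univ, true_and] at hΔ ⊢
        exact hΔ.2
    have h4 := D.card_classes_meeting B
    unfold Nat.ModEq at h1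
    omega
  have hsum : ∀ α : Ω, g • α = α →
      ∑ B ∈ {B | I α B ∧ g • B = B}, (2 * #{Δ | g • Δ = Δ ∧ ∃ x, cl x = Δ ∧ I x B} - 1) =
        4 * (3 * #{Δ : C | g • Δ = Δ} - 1) := fun α hα => by
    rw [← hu]
    exact D.sum_fixed_blocks h7 (by norm_num) (by norm_num) hg hα
  have hbound : ∀ α : Ω, g • α = α → ∀ t,
      (∀ B, g • B = B → 2 * #{Δ | g • Δ = Δ ∧ ∃ x, cl x = Δ ∧ I x B} - 1 ≤ t) →
        4 * (3 * #{Δ : C | g • Δ = Δ} - 1) ≤ 8 * t := by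
    intro α hα t ht
    rw [← hsum α hα, ← hT α hα, ← smul_eq_mul]
    exact sum_le_card_nsmul _ _ _ fun B hB => ht B (mem_filter.mp hB).2.2
  obtain ⟨α, hα⟩ := exists_fixed_of_card_pos (X := Ω) (g := g) (by omega)
  rcases hf with hf | hf | hf
  · have := hbound α hα 3 fun B hB => by have := hm B hB; omega
    omega
  · have := hbound α hα 17 fun B hB => by have := hm B hB; omega
    omega
  · have hm16 : ∀ β B, g • β = β → I β B → g • B = B →
        #{Δ | g • Δ = Δ ∧ ∃ x, cl x = Δ ∧ I x B} = 16 := by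
      intro β B hβ hβB hB
      have h1 := hsum β hβ
      have h2 : ∑ B ∈ {B | I β B ∧ g • B = B}, 31 = 4 * (3 * 21 - 1) := by
        rw [sum_const, hT β hβ, smul_eq_mul]
      rw [hf, ← h2, sum_eq_sum_iff_of_le] at h1
      · have := h1 B (by simp [hβB, hB])
        omega
      · intro B hB
        have := hm B (mem_filter.mp hB).2.2
        omega
    have hcount := sum_card_bipartiteAbove_eq_sum_card_bipartiteBelow
      (s := ({x | g • x = x} : Finset Ω))
      (t := ({B | g • B = B ∧ ∃ x, g • x = x ∧ I x B} : Finset Bl)) I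
    simp only [bipartiteAbove, bipartiteBelow] at hcount
    rw [sum_const_nat (m := 8), sum_const_nat (m := 32), hu, hf] at hcount
    · omega
    · intro B hB
      obtain ⟨hB, β, hβ, hβB⟩ := (mem_filter.mp hB).2
      rw [filter_filter, D.card_fixed_incident h7 (by norm_num) hg hB, hm16 β B hβ hβB hB]
    · intro β hβ
      have hβ := (mem_filter.mp hβ).2
      rw [← hT β hβ]
      congr 1
      ext B
      simp only [mem_filter, mem_univ, true_and]
      exact ⟨fun h => ⟨h.2, h.1.1⟩, fun h => ⟨⟨h.2, β, hβ, h.1⟩, h.1⟩⟩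

theorem card_fixed_classSubMulAction (D : IsFlagTransitiveDesign G I cl lam k c ℓ) {Δ : C}
    (g : stabilizer G Δ) :
    #{x : D.classSubMulAction Δ | g • x = x} = #{x | g.1 • x = x ∧ cl x = Δ} := by
  rw [← card_map (Function.Embedding.subtype _)]
  congr 1
  ext x
  simp only [mem_map, mem_filter, mem_univ, true_and, Function.Embedding.subtype_apply]
  constructor
  · rintro ⟨y, hy, rfl⟩
    exact ⟨congrArg Subtype.val hy, y.2⟩
  · rintro ⟨hx, hxΔ⟩
    exact ⟨⟨x, hxΔ⟩, Subtype.ext hx, rfl⟩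

theorem card_through_of_twenty_eight_classes (D : IsFlagTransitiveDesign G I cl 4 32 10 2)
    (hC : Fintype.card C = 28) (α : Ω) : #{B | I α B} = 36 := by
  have hr := D.card_through_mul α
  rw [D.card_points, hC] at hr
  omega

theorem isPreprimitive_class_of_twenty_eight_classes (D : IsFlagTransitiveDesign G I cl 4 32 10 2)
    (hC : Fintype.card C = 28) (Δ : C) :
    IsPreprimitive (stabilizer G Δ) (D.classSubMulAction Δ) := by
  obtain ⟨α, rfl⟩ := D.exists_mem_class Δ
  refine D.isPreprimitive_classSubMulAction α fun m hm0 hm hdvd => ?_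
  have hm10 : m ≤ 10 := Nat.le_of_dvd (by norm_num) hm
  rw [D.card_through_of_twenty_eight_classes hC] at hdvd
  interval_cases m <;> revert hm hdvd <;> decide

theorem isPreprimitive_classes_of_twenty_eight_classes (D : IsFlagTransitiveDesign G I cl 4 32 10 2)
    (hC : Fintype.card C = 28) : IsPreprimitive G C := by
  obtain ⟨Δ⟩ : Nonempty C := Fintype.card_pos_iff.mp (by omega)
  obtain ⟨α, rfl⟩ := D.exists_mem_class Δ
  refine D.isPreprimitive_classes α fun m hm0 hm hdvd => ?_
  rw [hC] at hm ⊢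
  have hm28 : m ≤ 28 := Nat.le_of_dvd (by norm_num) hm
  rw [D.card_through_of_twenty_eight_classes hC] at hdvd
  interval_cases m <;> revert hm hdvd <;> decide

theorem not_seven_dvd_card_stabilizer [Finite G] (D : IsFlagTransitiveDesign G I cl 4 32 10 2)
    (hC : Fintype.card C = 28) (hK : ∀ g : G, (∀ Δ : C, g • Δ = Δ) → g = 1) (Δ : C) :
    ¬ 7 ∣ Nat.card (stabilizer G Δ) := by
  intro h
  obtain ⟨g, hg1, hg, hgΔ⟩ := exists_smul_eq_pow_eq_one_of_dvd (by norm_num) h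
  exact D.false_of_pow_seven_eq_one_of_smul_class_eq hC hK hg1 hg hgΔ

theorem not_dvd_card_of_eleven_le [Finite G] (D : IsFlagTransitiveDesign G I cl 4 32 10 2)
    (hC : Fintype.card C = 28) {p : ℕ} (hp : p.Prime) (hp11 : 11 ≤ p) : ¬ p ∣ Nat.card G := by
  intro h
  have := D.isPretransitive_classes
  obtain ⟨Δ⟩ : Nonempty C := Fintype.card_pos_iff.mp (by omega)
  rw [← card_mul_card_stabilizer (G := G) Δ, hC, hp.dvd_mul] at h
  rcases h with h | h
  · have hle := Nat.le_of_dvd (by norm_num) h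
    interval_cases p <;> revert h hp <;> decide
  · obtain ⟨g, hg1, hg, hgΔ⟩ := exists_smul_eq_pow_eq_one_of_dvd hp h
    exact hg1 (D.eq_one_of_card_class_lt hp (by omega) (by norm_num) (by omega) hg hgΔ)

theorem false_of_pow_five_eq_one_of_smul_eq [Finite G] (D : IsFlagTransitiveDesign G I cl 4 32 10 2)
    (hC : Fintype.card C = 28) (hK : ∀ g : G, (∀ Δ : C, g • Δ = Δ) → g = 1) {g : G} (hg1 : g ≠ 1)
    (hg : g ^ 5 = 1) {α : Ω} (hα : g • α = α) : False := by
  have h5 : Nat.Prime 5 := by norm_num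
  have hgΔ : g • cl α = cl α := by rw [← D.class_smul, hα]
  have hf : #{x | g • x = x ∧ cl x = cl α} = 4 + 1 := by
    have h1 := D.card_fixed_class_modEq h5 hg hgΔ
    have h2 := D.card_fixed_class_lt h5 (by norm_num) (by norm_num) hg1 hg (cl α)
    have h3 : 0 < #{x | g • x = x ∧ cl x = cl α} := card_pos.mpr ⟨α, by simp [hα]⟩
    unfold Nat.ModEq at h1
    omega
  have hmt := isMultiplyPretransitive_of_prime_cycle
    (D.isPreprimitive_class_of_twenty_eight_classes hC (cl α)) h5 (g := ⟨g, hgΔ⟩)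
    (fun x => Subtype.ext (by change g ^ 5 • x.1 = x.1; rw [hg, one_smul]))
    (by rw [← hf, ← D.card_fixed_classSubMulAction ⟨g, hgΔ⟩]; congr!)
    (by rw [D.card_classSubMulAction])
  have hdvd := descFactorial_dvd_card_of_isMultiplyPretransitive
    (by rw [D.card_classSubMulAction]; norm_num) hmt
  rw [D.card_classSubMulAction] at hdvd
  exact D.not_seven_dvd_card_stabilizer hC hK (cl α)
    ((by decide : 7 ∣ Nat.descFactorial 10 (4 + 2)).trans hdvd)

theorem not_five_sq_dvd_card [Finite G] (D : IsFlagTransitiveDesign G I cl 4 32 10 2)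
    (hC : Fintype.card C = 28) (hK : ∀ g : G, (∀ Δ : C, g • Δ = Δ) → g = 1) :
    ¬ 5 ^ 2 ∣ Nat.card G := by
  intro h
  have := D.isPretransitive_points
  obtain ⟨Δ⟩ : Nonempty C := Fintype.card_pos_iff.mp (by omega)
  obtain ⟨α, rfl⟩ := D.exists_mem_class Δ
  rw [← card_mul_card_stabilizer (G := G) α, D.card_points, hC] at h
  obtain ⟨g, hg1, hg, hgα⟩ := exists_smul_eq_pow_eq_one_of_dvd (by norm_num : Nat.Prime 5)
    (by omega : 5 ∣ Nat.card (stabilizer G α))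
  exact D.false_of_pow_five_eq_one_of_smul_eq hC hK hg1 hg hgα

theorem exists_pow_five_eq_one [Finite G] (D : IsFlagTransitiveDesign G I cl 4 32 10 2) (Δ : C) :
    ∃ g : G, g ≠ 1 ∧ g ^ 5 = 1 ∧ g • Δ = Δ :=
  exists_smul_eq_pow_eq_one_of_dvd (by norm_num)
    ((by norm_num : 5 ∣ 10).trans (D.dvd_card_stabilizer_class Δ))

theorem ncard_orbit_stabilizer_ne_nine [Finite G] (D : IsFlagTransitiveDesign G I cl 4 32 10 2)
    (hC : Fintype.card C = 28) (hK : ∀ g : G, (∀ Δ : C, g • Δ = Δ) → g = 1) {Δ Δ' : C}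
    (hne : Δ ≠ Δ') : (orbit (stabilizer G Δ) Δ').ncard ≠ 9 := by
  intro h9
  have hprim := D.isPreprimitive_classes_of_twenty_eight_classes hC
  by_cases h : ∀ g : G, g ^ 5 = 1 → g • Δ = Δ → g • Δ' = Δ'
  · obtain ⟨g, hg1, hg, hgΔ⟩ := D.exists_pow_five_eq_one Δ
    exact hg1 (hK g (smul_eq_of_forall_pow_eq_one hprim hne h hg hgΔ))
  · push Not at h
    obtain ⟨g, hg, hgΔ, hgΔ'⟩ := h
    have hcard : Fintype.card (orbit (stabilizer G Δ) Δ') = 9 := by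
      rw [← h9, ← Nat.card_eq_fintype_card]
      rfl
    let g' : stabilizer G Δ := ⟨g, hgΔ⟩
    have hg' : g' ^ 5 = 1 := Subtype.ext hg
    have hfix : #{x : orbit (stabilizer G Δ) Δ' | g' • x = x} = 4 := by
      have h1 : Fintype.card (orbit (stabilizer G Δ) Δ') ≡
          #{x : orbit (stabilizer G Δ) Δ' | g' • x = x} [MOD 5] := by
        convert card_fixed_modEq (X := orbit (stabilizer G Δ) Δ') (by norm_num) hg'
      have h2 : #{x : orbit (stabilizer G Δ) Δ' | g' • x = x} < 9 := by
        rw [← hcard]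
        refine card_lt_univ_of_notMem (x := ⟨Δ', mem_orbit_self Δ'⟩) fun hmem => hgΔ' ?_
        exact congrArg Subtype.val (mem_filter.mp hmem).2
      rw [hcard] at h1
      unfold Nat.ModEq at h1
      omega
    exact D.not_seven_dvd_card_stabilizer hC hK Δ
      (seven_dvd_card_of_card_eq_nine hcard hg' (by convert hfix))

theorem exists_smul_eq_of_ne [Finite G] (D : IsFlagTransitiveDesign G I cl 4 32 10 2)
    (hC : Fintype.card C = 28) (hK : ∀ g : G, (∀ Δ : C, g • Δ = Δ) → g = 1) {Δ Δ₁ Δ₂ : C}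
    (h₁ : Δ₁ ≠ Δ) (h₂ : Δ₂ ≠ Δ) : ∃ g : G, g • Δ = Δ ∧ g • Δ₁ = Δ₂ := by
  obtain ⟨α, rfl⟩ := D.exists_mem_class Δ
  let O : C → Finset C := fun Γ => (orbit (stabilizer G (cl α)) Γ).toFinset
  have hO : ∀ Γ Γ', Γ' ∈ O Γ ↔ Γ' ∈ orbit (stabilizer G (cl α)) Γ := fun Γ Γ' => Set.mem_toFinset
  have hnot : ∀ Γ, Γ ≠ cl α → cl α ∉ O Γ := by
    rintro Γ hΓ h
    obtain ⟨g, hg⟩ := (hO _ _).mp h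
    exact hΓ (smul_left_cancel g (hg.trans (mem_stabilizer_iff.mp g.2).symm))
  have h9 : ∀ Γ, Γ ≠ cl α → 9 ∣ #(O Γ) := by
    intro Γ hΓ
    have h := D.card_through_dvd_of_classes (hnot Γ hΓ) fun g hg Γ' hΓ' =>
      (hO _ _).mpr (mem_orbit_of_mem_orbit (⟨g, hg⟩ : stabilizer G (cl α)) ((hO _ _).mp hΓ'))
    rw [D.card_through_of_twenty_eight_classes hC] at h
    omega
  have hne9 : ∀ Γ, Γ ≠ cl α → #(O Γ) ≠ 9 := by
    intro Γ hΓ h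
    refine D.ncard_orbit_stabilizer_ne_nine hC hK hΓ.symm ?_
    rw [Set.ncard_eq_toFinset_card']
    exact h
  have hpos : ∀ Γ, 0 < #(O Γ) := fun Γ => card_pos.mpr ⟨Γ, (hO _ _).mpr (mem_orbit_self Γ)⟩
  by_contra! hcon
  have hdisj : Disjoint (O Δ₁) (O Δ₂) := by
    rw [disjoint_left]
    intro Γ hΓ₁ hΓ₂
    have h : Δ₂ ∈ orbit (stabilizer G (cl α)) Δ₁ :=
      (orbit_eq_iff.mpr ((hO _ _).mp hΓ₁)) ▸ mem_orbit_symm.mp ((hO _ _).mp hΓ₂)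
    obtain ⟨g, hg⟩ := h
    exact hcon g.1 g.2 hg
  have hle : #(O Δ₁ ∪ O Δ₂) ≤ #((univ : Finset C).erase (cl α)) := by
    refine card_le_card fun Γ hΓ => mem_erase.mpr ⟨?_, mem_univ _⟩
    rintro rfl
    rcases mem_union.mp hΓ with h | h
    exacts [hnot _ h₁ h, hnot _ h₂ h]
  rw [card_union_of_disjoint hdisj, card_erase_of_mem (mem_univ _), card_univ, hC] at hle
  have := h9 _ h₁
  have := h9 _ h₂
  have := hne9 _ h₁
  have := hne9 _ h₂
  have := hpos Δ₁
  have := hpos Δ₂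
  omega

theorem card_fixed_classes_eq_three [Finite G] (D : IsFlagTransitiveDesign G I cl 4 32 10 2)
    (hC : Fintype.card C = 28) (hK : ∀ g : G, (∀ Δ : C, g • Δ = Δ) → g = 1) {g : G} (hg1 : g ≠ 1)
    (hg : g ^ 5 = 1) : #{Δ : C | g • Δ = Δ} = 3 ∧
      3 ∣ Nat.card (Subgroup.normalizer (Subgroup.zpowers g : Set G)) := by
  have h5 : Nat.Prime 5 := by norm_num
  have := D.isPretransitive_classes
  have h2 : IsMultiplyPretransitive G C 2 := by
    rw [is_two_pretransitive_iff]
    intro a b a' b' hab hab'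
    obtain ⟨t, rfl⟩ := exists_smul_eq G a a'
    obtain ⟨u, hu, hub⟩ := D.exists_smul_eq_of_ne hC hK
      (fun h => hab (smul_left_cancel t h).symm : t • b ≠ t • a) hab'.symm
    exact ⟨u * t, by rw [mul_smul, hu], by rw [mul_smul, hub]⟩
  have hmod := card_fixed_modEq (X := C) h5 hg
  have hlt := card_fixed_lt_of_faithful hK hg1
  rw [hC] at hmod hlt
  unfold Nat.ModEq at hmod
  have hdvd : (#{Δ : C | g • Δ = Δ}).descFactorial 2 ∣
      Nat.card (Subgroup.normalizer (Subgroup.zpowers g : Set G)) := by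
    have : IsPretransitive G (Fin 2 ↪ C) := h2
    have hcard := card_fixed_embeddings (X := C) g 2
    have hpos : 0 < #{e : Fin 2 ↪ C | g • e = e} := by
      rw [hcard]
      exact Nat.descFactorial_pos.mpr (by omega)
    rw [← hcard]
    convert card_fixed_dvd_card_normalizer (X := Fin 2 ↪ C) h5 hg1 hg
      (D.not_five_sq_dvd_card hC hK) (by convert hpos)
  have hprime : ∀ p, p.Prime → 11 ≤ p → ¬ p ∣ (#{Δ : C | g • Δ = Δ}).descFactorial 2 :=
    fun p hp hp11 h => D.not_dvd_card_of_eleven_le hC hp hp11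
      (h.trans (hdvd.trans (Subgroup.card_subgroup_dvd_card _)))
  have hcases : #{Δ : C | g • Δ = Δ} = 3 ∨ #{Δ : C | g • Δ = Δ} = 8 ∨
      #{Δ : C | g • Δ = Δ} = 13 ∨ #{Δ : C | g • Δ = Δ} = 18 ∨ #{Δ : C | g • Δ = Δ} = 23 := by
    omega
  rcases hcases with h | h | h | h | h
  · rw [h] at hdvd
    exact ⟨h, (by decide : 3 ∣ Nat.descFactorial 3 2).trans hdvd⟩
  · exfalso
    rw [h] at hdvd
    have h7 : Nat.Prime 7 := by norm_num
    obtain ⟨y, hy1, hy7⟩ := exists_pow_eq_one_of_dvd h7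
      ((by decide : 7 ∣ Nat.descFactorial 8 2).trans hdvd)
    have hy7' : y.1 ^ 7 = 1 := congrArg Subtype.val hy7
    have hmod7 := card_filter_fixed_modEq h7 (g := y.1) (S := {Δ : C | g • Δ = Δ})
      (fun Δ hΔ => by
        simp only [mem_filter, mem_univ, true_and] at hΔ ⊢
        exact smul_smul_eq_of_mem_normalizer y.2 hΔ)
      (fun Δ _ => by rw [hy7', one_smul])
    rw [h] at hmod7
    unfold Nat.ModEq at hmod7
    obtain ⟨Δ, hΔ⟩ := card_pos.mp (by omega : 0 < #{Δ ∈ ({Δ | g • Δ = Δ} : Finset C) | y.1 • Δ = Δ})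
    exact D.false_of_pow_seven_eq_one_of_smul_class_eq hC hK (fun h => hy1 (Subtype.ext h)) hy7'
      (mem_filter.mp hΔ).2
  · exact absurd (by rw [h]; decide) (hprime 13 (by norm_num) (by norm_num))
  · exact absurd (by rw [h]; decide) (hprime 17 (by norm_num) (by norm_num))
  · exact absurd (by rw [h]; decide) (hprime 11 (by norm_num) (by norm_num))

theorem exists_forall_smul_ne_of_smul_eq_on_class (D : IsFlagTransitiveDesign G I cl 4 32 10 2)
    (hC : Fintype.card C = 28) (Δ : C) : ∃ Γ Γ' : C, Γ ≠ Δ ∧ Γ' ≠ Δ ∧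
      ∀ n : G, (∀ x, cl x = Δ → n • x = x) → n • Γ ≠ Γ' := by
  by_contra! hcon
  obtain ⟨α, hα⟩ := D.exists_mem_class Δ
  obtain ⟨β, hβ, hne⟩ := exists_mem_ne (by rw [D.card_class]; norm_num : 1 < #{x | cl x = Δ}) α
  simp only [mem_filter, mem_univ, true_and] at hβ
  let T : Finset Bl := {B | I α B ∧ I β B}
  have hT : #T = 4 := D.card_pair α β hne.symm
  have hle : ∀ Γ Γ' : C, Γ ≠ Δ → Γ' ≠ Δ →
      #{B ∈ T | ∃ x, cl x = Γ ∧ I x B} ≤ #{B ∈ T | ∃ x, cl x = Γ' ∧ I x B} := by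
    intro Γ Γ' hΓ hΓ'
    obtain ⟨n, hn, rfl⟩ := hcon Γ Γ' hΓ hΓ'
    refine card_le_card_of_injOn (n • ·) (fun B hB => ?_) (MulAction.injective n).injOn
    simp only [T, coe_filter, Set.mem_ofPred_eq, mem_filter, mem_univ, true_and] at hB ⊢
    obtain ⟨⟨hαB, hβB⟩, x, rfl, hx⟩ := hB
    refine ⟨⟨?_, ?_⟩, n • x, D.class_smul n x, D.smul_incident n x B hx⟩
    · exact hn α hα ▸ D.smul_incident n α B hαB
    · exact hn β hβ ▸ D.smul_incident n β B hβB
  obtain ⟨Γ₀, hΓ₀⟩ : ∃ Γ₀, Γ₀ ≠ Δ := by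
    obtain ⟨Γ, -, hΓ⟩ := exists_mem_ne (s := (univ : Finset C))
      (by rw [card_univ, hC]; norm_num) Δ
    exact ⟨Γ, hΓ⟩
  have hcount := sum_card_bipartiteAbove_eq_sum_card_bipartiteBelow
    (s := (univ : Finset C).erase Δ) (t := T) (fun Γ B => ∃ x, cl x = Γ ∧ I x B)
  simp only [bipartiteAbove, bipartiteBelow] at hcount
  rw [sum_const_nat (m := #{B ∈ T | ∃ x, cl x = Γ₀ ∧ I x B}), sum_const_nat (m := 15),
    card_erase_of_mem (mem_univ _), card_univ, hC, hT] at hcount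
  · omega
  · intro B hB
    have hmem : Δ ∈ ({Γ | ∃ x, cl x = Γ ∧ I x B} : Finset C) := by
      simp only [mem_filter, mem_univ, true_and]
      exact ⟨α, hα, (mem_filter.mp hB).2.1⟩
    have h16 := D.card_classes_meeting B
    rw [filter_erase, card_erase_of_mem hmem]
    omega
  · intro Γ hΓ
    have hΓ := (mem_erase.mp hΓ).1
    exact (hle Γ Γ₀ hΓ hΓ₀).antisymm (hle Γ₀ Γ hΓ₀ hΓ)

theorem isPretransitive_ofStabilizer_classes [Finite G]
    (D : IsFlagTransitiveDesign G I cl 4 32 10 2)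
    (hC : Fintype.card C = 28) (hK : ∀ g : G, (∀ Δ : C, g • Δ = Δ) → g = 1) (Δ : C) :
    IsPretransitive (stabilizer G Δ) (SubMulAction.ofStabilizer G Δ) := by
  refine ⟨fun x y => ?_⟩
  obtain ⟨g, hg, hxy⟩ := D.exists_smul_eq_of_ne hC hK x.2 y.2
  exact ⟨⟨g, hg⟩, Subtype.ext hxy⟩

theorem eq_one_of_smul_eq_on_class_of_twenty_eight_classes [Finite G]
    (D : IsFlagTransitiveDesign G I cl 4 32 10 2) (hC : Fintype.card C = 28)
    (hK : ∀ g : G, (∀ Δ : C, g • Δ = Δ) → g = 1) {n : G} {Δ : C}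
    (hn : ∀ x, cl x = Δ → n • x = x) : n = 1 := by
  have h5 : Nat.Prime 5 := by norm_num
  have := D.isPretransitive_ofStabilizer_classes hC hK Δ
  have hnΔ : ∀ n : G, (∀ x, cl x = Δ → n • x = x) → n • Δ = Δ := by
    intro n hn
    obtain ⟨x, rfl⟩ := D.exists_mem_class Δ
    rw [← D.class_smul, hn x rfl]
  let N : Subgroup (stabilizer G Δ) := (toPermHom (stabilizer G Δ) (D.classSubMulAction Δ)).ker
  have hN : ∀ m : stabilizer G Δ, m ∈ N ↔ ∀ x, cl x = Δ → m.1 • x = x := by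
    intro m
    rw [MonoidHom.mem_ker, Equiv.ext_iff]
    exact ⟨fun h x hx => congrArg Subtype.val (h ⟨x, hx⟩), fun h x => Subtype.ext (h x.1 x.2)⟩
  obtain ⟨g, hg1, hg, hgΔ⟩ := D.exists_pow_five_eq_one Δ
  have hf := (D.card_fixed_classes_eq_three hC hK hg1 hg).1
  obtain ⟨Δ', hΔ', hne⟩ := exists_mem_ne (by omega : 1 < #{Δ : C | g • Δ = Δ}) Δ
  have hgΔ' : g • Δ' = Δ' := (mem_filter.mp hΔ').2
  let g' : stabilizer G Δ := ⟨g, hgΔ⟩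
  let a : SubMulAction.ofStabilizer G Δ := ⟨Δ', hne⟩
  have hga : g' • a = a := Subtype.ext hgΔ'
  have hblock : IsBlock (stabilizer G Δ) (orbit N a) := IsBlock.orbit_of_normal a
  have hcard : Nat.card (SubMulAction.ofStabilizer G Δ) = 27 := by
    rw [SubMulAction.nat_card_ofStabilizer_eq, Nat.card_eq_fintype_card, hC]
  have hdvd := hblock.ncard_dvd_card ⟨a, mem_orbit_self a⟩
  rw [hcard] at hdvd
  have hmem : (orbit N a).ncard ∈ Nat.divisors 27 := Nat.mem_divisors.mpr ⟨hdvd, by norm_num⟩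
  rw [show Nat.divisors 27 = {1, 3, 9, 27} by decide] at hmem
  simp only [mem_insert, mem_singleton] at hmem
  have hfixed : 3 ≤ (orbit N a).ncard → (orbit N a).ncard % 5 = 3 ∨ (orbit N a).ncard % 5 = 4 →
      False := by
    intro _ hmod
    have hgO : g' • orbit N a = orbit N a :=
      hblock.smul_eq_of_mem (mem_orbit_self a) (by rw [hga]; exact mem_orbit_self a)
    have h : (orbit N a).ncard ≡ #{x ∈ (orbit N a).toFinset | g' • x = x} [MOD 5] := by
      rw [Set.ncard_eq_toFinset_card']
      convert card_filter_fixed_modEq h5 (g := g') (S := (orbit N a).toFinset)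
        (fun x hx => by
          rw [Set.mem_toFinset] at hx ⊢
          exact hgO ▸ Set.smul_mem_smul_set hx)
        (fun x _ => by rw [show g' ^ 5 = 1 from Subtype.ext hg, one_smul])
    unfold Nat.ModEq at h
    have hle : #(({x ∈ (orbit N a).toFinset | g' • x = x}).map (Function.Embedding.subtype _)) ≤
        #(({Δ : C | g • Δ = Δ} : Finset C).erase Δ) := by
      refine card_le_card fun x hx => ?_
      obtain ⟨y, hy, rfl⟩ := mem_map.mp hx
      exact mem_erase.mpr ⟨y.2, mem_filter.mpr ⟨mem_univ _,
        congrArg Subtype.val (mem_filter.mp hy).2⟩⟩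
    rw [card_map, card_erase_of_mem (by simpa using hgΔ), hf] at hle
    omega
  rcases hmem with h | h | h | h
  · refine hK n fun Γ => ?_
    by_cases hΓ : Γ = Δ
    · rw [hΓ, hnΔ n hn]
    obtain ⟨t, ht⟩ := exists_smul_eq (stabilizer G Δ) a ⟨Γ, hΓ⟩
    have hmN : t⁻¹ * ⟨n, hnΔ n hn⟩ * t ∈ N := by
      have := (inferInstance : N.Normal).conj_mem ⟨n, hnΔ n hn⟩ ((hN _).mpr hn) t⁻¹
      rwa [inv_inv] at this
    have hfix : (t⁻¹ * ⟨n, hnΔ n hn⟩ * t) • a = a :=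
      Set.ncard_le_one_iff_subsingleton.mp h.le (mem_orbit a (⟨_, hmN⟩ : N)) (mem_orbit_self a)
    rw [mul_smul, mul_smul, inv_smul_eq_iff, ht] at hfix
    exact congrArg Subtype.val hfix
  · exact (hfixed (by omega) (by omega)).elim
  · exact (hfixed (by omega) (by omega)).elim
  · have huniv : orbit N a = Set.univ := by rw [Set.eq_univ_iff_ncard, h, hcard]
    obtain ⟨Γ, Γ', hΓ, hΓ', hno⟩ := D.exists_forall_smul_ne_of_smul_eq_on_class hC Δ
    obtain ⟨u, hu⟩ :=
      (huniv ▸ Set.mem_univ _ : (⟨Γ, hΓ⟩ : SubMulAction.ofStabilizer G Δ) ∈ orbit N a)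
    obtain ⟨w, hw⟩ :=
      (huniv ▸ Set.mem_univ _ : (⟨Γ', hΓ'⟩ : SubMulAction.ofStabilizer G Δ) ∈ orbit N a)
    have hwu : (w * u⁻¹) • (⟨Γ, hΓ⟩ : SubMulAction.ofStabilizer G Δ) = ⟨Γ', hΓ'⟩ := by
      rw [← hu, mul_smul, ← hw]
      simp
    exact (hno (w * u⁻¹).1.1 ((hN _).mp (w * u⁻¹).2) (congrArg Subtype.val hwu)).elim

/-- The case of the parameters `(4, 280, 32, 10, 28, 2)`. -/
theorem not_faithful_of_twenty_eight_classes [Finite G]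
    (D : IsFlagTransitiveDesign G I cl 4 32 10 2)
    (hC : Fintype.card C = 28) (hK : ∀ g : G, (∀ Δ : C, g • Δ = Δ) → g = 1) : False := by
  obtain ⟨Δ₀⟩ : Nonempty C := Fintype.card_pos_iff.mp (by omega)
  obtain ⟨g, hg1, hg, -⟩ := D.exists_pow_five_eq_one Δ₀
  obtain ⟨hf, hN⟩ := D.card_fixed_classes_eq_three hC hK hg1 hg
  obtain ⟨⟨y, hyN⟩, hy1, hy3⟩ := exists_pow_eq_one_of_dvd Nat.prime_three hN
  replace hy1 : y ≠ 1 := fun h => hy1 (Subtype.ext h)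
  replace hy3 : y ^ 3 = 1 := congrArg Subtype.val hy3
  have hcomm := commute_of_mem_normalizer_of_pow_three hg1 hg hyN hy3
  have hmoved : #{Δ : C | ¬ g • Δ = Δ} = 25 := by
    have h := card_filter_add_card_filter_not (s := (univ : Finset C)) (fun Δ => g • Δ = Δ)
    rw [hf, card_univ, hC] at h
    omega
  have hmod := card_filter_fixed_modEq Nat.prime_three (g := y) (S := {Δ : C | ¬ g • Δ = Δ})
    (fun Δ hΔ => by
      simp only [mem_filter, mem_univ, true_and] at hΔ ⊢
      rwa [← mul_smul, ← hcomm, mul_smul, smul_left_cancel_iff])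
    (fun Δ _ => by rw [hy3, one_smul])
  rw [hmoved] at hmod
  unfold Nat.ModEq at hmod
  obtain ⟨Δ, hΔ⟩ := card_pos.mp
    (by omega : 0 < #{Δ ∈ ({Δ | ¬ g • Δ = Δ} : Finset C) | y • Δ = Δ})
  simp only [mem_filter, mem_univ, true_and] at hΔ
  obtain ⟨hgΔ, hyΔ⟩ := hΔ
  have := D.isPretransitive_ofStabilizer_classes hC hK Δ
  have h81 : 81 ∣ Nat.card (stabilizer G Δ) := by
    let b : SubMulAction.ofStabilizer G Δ := ⟨g • Δ, hgΔ⟩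
    have hcard := card_mul_card_stabilizer (G := stabilizer G Δ) b
    rw [← Nat.card_eq_fintype_card, SubMulAction.nat_card_ofStabilizer_eq,
      Nat.card_eq_fintype_card, hC] at hcard
    have h3 := dvd_card_of_pow_eq_one Nat.prime_three (g := (⟨y, hyΔ⟩ : stabilizer G Δ))
      (fun h => hy1 (congrArg Subtype.val h)) (Subtype.ext hy3) (stabilizer _ b)
      (Subtype.ext (by
        change y • g • Δ = g • Δ
        rw [← mul_smul, hcomm, mul_smul, hyΔ]))
    omega
  let φ := toPermHom (stabilizer G Δ) (D.classSubMulAction Δ)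
  have hφ : Function.Injective φ := by
    rw [injective_iff_map_eq_one]
    intro h hh
    exact Subtype.ext (D.eq_one_of_smul_eq_on_class_of_twenty_eight_classes hC hK (Δ := Δ)
      fun x hx => congrArg Subtype.val (Equiv.Perm.congr_fun hh ⟨x, hx⟩))
  have hrange : Nat.card φ.range = Nat.card (stabilizer G Δ) :=
    (Nat.card_congr (MonoidHom.ofInjective hφ).toEquiv).symm
  obtain ⟨_, ⟨z, rfl⟩, hz3, hz⟩ := exists_threeCycle_of_card_eq_ten (D.card_classSubMulAction Δ)
    φ.range (hrange ▸ h81)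
  rw [← map_pow] at hz3
  have hmt := isMultiplyPretransitive_of_prime_cycle
    (D.isPreprimitive_class_of_twenty_eight_classes hC Δ) Nat.prime_three (g := z) (f := 6)
    (fun x => Equiv.Perm.congr_fun hz3 x) (by convert hz; rfl) (by rw [D.card_classSubMulAction])
  have hdvd := descFactorial_dvd_card_of_isMultiplyPretransitive
    (by rw [D.card_classSubMulAction]; norm_num) hmt
  rw [D.card_classSubMulAction] at hdvd
  exact D.not_seven_dvd_card_stabilizer hC hK Δ
    ((by decide : 7 ∣ Nat.descFactorial 10 (6 + 2)).trans hdvd)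

end IsFlagTransitiveDesign

/-- A group of permutations acts on any invariant family of finite sets. -/
abbrev imageMulAction {Ω : Type*} [DecidableEq Ω] (G : Subgroup (Equiv.Perm Ω))
    (S : Finset (Finset Ω)) (h : ∀ g ∈ G, ∀ B ∈ S, B.image ⇑g ∈ S) : MulAction G S where
  smul g B := ⟨B.1.image ⇑g.1, h g.1 g.2 B.1 B.2⟩
  one_smul B := Subtype.ext (by
    change B.1.image ⇑(1 : Equiv.Perm Ω) = B.1
    simp)
  mul_smul g g' B := Subtype.ext (by
    change B.1.image ⇑(g.1 * g'.1) = (B.1.image ⇑g'.1).image ⇑g.1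
    rw [Finset.image_image, Equiv.Perm.coe_mul])

theorem exists_isFlagTransitiveDesign {Ω : Type*} [Fintype Ω] [DecidableEq Ω]
    {k lam c ℓ : ℕ} {𝓑 𝓒 : Finset (Finset Ω)} {G : Subgroup (Equiv.Perm Ω)}
    (hlam1 : 1 ≤ lam) (hkcard : ∀ B ∈ 𝓑, B.card = k)
    (hpairs : ∀ α β : Ω, α ≠ β → (𝓑.filter (fun B => α ∈ B ∧ β ∈ B)).card = lam)
    (hGB : ∀ g ∈ G, ∀ B ∈ 𝓑, B.image ⇑g ∈ 𝓑)
    (hflag : ∀ B₁ ∈ 𝓑, ∀ B₂ ∈ 𝓑, ∀ α₁ ∈ B₁, ∀ α₂ ∈ B₂,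
        ∃ g ∈ G, B₁.image ⇑g = B₂ ∧ g α₁ = α₂)
    (hpart : ∀ ω : Ω, ∃! Δ, Δ ∈ 𝓒 ∧ ω ∈ Δ)
    (hccard : ∀ Δ ∈ 𝓒, Δ.card = c) (hc2 : 2 ≤ c)
    (hGC : ∀ g ∈ G, ∀ Δ ∈ 𝓒, Δ.image ⇑g ∈ 𝓒) (hl2 : 2 ≤ ℓ)
    (hlcap : ∀ B ∈ 𝓑, ∀ Δ ∈ 𝓒, (B ∩ Δ).Nonempty → (B ∩ Δ).card = ℓ) :
    letI := imageMulAction G 𝓑 hGB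
    letI := imageMulAction G 𝓒 hGC
    ∃ cl : Ω → 𝓒, (∀ ω Δ, cl ω = Δ ↔ ω ∈ Δ.1) ∧
      IsFlagTransitiveDesign G (fun x (B : 𝓑) => x ∈ B.1) cl lam k c ℓ := by
  choose cl hcl huniq using hpart
  simp only at hcl huniq
  have hmem : ∀ (ω : Ω) (Δ : 𝓒), (⟨cl ω, (hcl ω).1⟩ : 𝓒) = Δ ↔ ω ∈ Δ.1 := by
    refine fun ω Δ => ⟨?_, fun h => Subtype.ext (huniq ω Δ.1 ⟨Δ.2, h⟩).symm⟩
    rintro rfl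
    exact (hcl ω).2
  let := imageMulAction G 𝓑 hGB
  let := imageMulAction G 𝓒 hGC
  refine ⟨fun ω => ⟨cl ω, (hcl ω).1⟩, hmem, ?_⟩
  exact
    { smul_incident := fun g x B hx => mem_image_of_mem _ hx
      class_smul := fun g x => (hmem _ _).mpr (mem_image_of_mem _ (hcl x).2)
      card_block := fun B => by simpa using hkcard B.1 B.2
      card_pair := fun x y hxy => by
        rw [← hpairs x y hxy, ← card_map (Function.Embedding.subtype _)]
        congr 1
        ext B
        simp [and_comm, and_assoc]
      exists_flag_smul := fun x y B B' hx hy => by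
        obtain ⟨g, hg, hgB, hgx⟩ := hflag B.1 B.2 B'.1 B'.2 x hx y hy
        exact ⟨⟨g, hg⟩, hgx, Subtype.ext hgB⟩
      card_class := fun Δ => by
        simp only [hmem]
        simpa using hccard Δ.1 Δ.2
      card_inter := fun x B hx => by
        rw [← hlcap B.1 B.2 (cl x) (hcl x).1 ⟨x, mem_inter.mpr ⟨hx, (hcl x).2⟩⟩]
        congr 1
        ext y
        simp only [mem_filter, mem_univ, true_and, mem_inter, hmem]
      faithful := fun g hg => Subtype.ext (Equiv.ext hg)
      one_le_lam := hlam1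
      two_le_c := hc2
      two_le_l := hl2 }

end Designs

theorem stmt_17
    {Ω : Type*} [Fintype Ω] [DecidableEq Ω]
    (v k lam c d ℓ : ℕ)
    (𝓑 𝓒 : Finset (Finset Ω))
    (G : Subgroup (Equiv.Perm Ω))
    (hv : Fintype.card Ω = v)
    (hlam1 : 1 ≤ lam)
    (hkcard : ∀ B ∈ 𝓑, B.card = k)
    (hpairs : ∀ α β : Ω, α ≠ β → (𝓑.filter (fun B => α ∈ B ∧ β ∈ B)).card = lam)
    (hk2 : 2 < k) (hkv : k < v)
    (hGB : ∀ g ∈ G, ∀ B ∈ 𝓑, B.image ⇑g ∈ 𝓑)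
    (hflag : ∀ B₁ ∈ 𝓑, ∀ B₂ ∈ 𝓑, ∀ α₁ ∈ B₁, ∀ α₂ ∈ B₂,
        ∃ g ∈ G, B₁.image ⇑g = B₂ ∧ g α₁ = α₂)
    (hpart : ∀ ω : Ω, ∃! Δ, Δ ∈ 𝓒 ∧ ω ∈ Δ)
    (hdcard : 𝓒.card = d) (hd2 : 2 ≤ d)
    (hccard : ∀ Δ ∈ 𝓒, Δ.card = c) (hc2 : 2 ≤ c)
    (hGC : ∀ g ∈ G, ∀ Δ ∈ 𝓒, Δ.image ⇑g ∈ 𝓒)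
    (hl2 : 2 ≤ ℓ)
    (hlcap : ∀ B ∈ 𝓑, ∀ Δ ∈ 𝓒, (B ∩ Δ).Nonempty → (B ∩ Δ).card = ℓ)
    (htuple : (lam, v, k, c, d, ℓ) = (3, 100, 12, 10, 10, 2) ∨
      (lam, v, k, c, d, ℓ) = (4, 100, 12, 10, 10, 2) ∨
      (lam, v, k, c, d, ℓ) = (4, 231, 24, 11, 21, 2) ∨
      (lam, v, k, c, d, ℓ) = (4, 280, 32, 10, 28, 2) ∨
      (lam, v, k, c, d, ℓ) = (4, 280, 32, 28, 10, 4))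
    : -- the kernel K of the action of G on 𝓒 is nontrivial
      (∃ g ∈ G, (∀ Δ ∈ 𝓒, Δ.image ⇑g = Δ) ∧ g ≠ 1) ∧
      -- and K acts faithfully on every class
      (∀ Δ ∈ 𝓒, ∀ g ∈ G, (∀ Δ' ∈ 𝓒, Δ'.image ⇑g = Δ') → (∀ ω ∈ Δ, g ω = ω) → g = 1) := by
  let := imageMulAction G 𝓑 hGB
  let := imageMulAction G 𝓒 hGC
  obtain ⟨cl, hcl, D⟩ := exists_isFlagTransitiveDesign hlam1 hkcard hpairs hGB hflag hpart hccard
    hc2 hGC hl2 hlcap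
  have hC : Fintype.card 𝓒 = d := by rw [Fintype.card_coe, hdcard]
  have hdesign := D.card_through_mul
  rw [hv] at hdesign
  have hkernel : ¬ (∀ g : G, (∀ Δ : 𝓒, g • Δ = Δ) → g = 1) →
      ∃ g ∈ G, (∀ Δ ∈ 𝓒, Δ.image ⇑g = Δ) ∧ g ≠ 1 := by
    intro h
    push Not at h
    obtain ⟨g, hg, hg1⟩ := h
    exact ⟨g.1, g.2, fun Δ hΔ => congrArg Subtype.val (hg ⟨Δ, hΔ⟩), fun h => hg1 (Subtype.ext h)⟩
  have hfaithful : (∀ (g : G) (Δ : 𝓒), (∀ Δ' : 𝓒, g • Δ' = Δ') → (∀ x, cl x = Δ → g • x = x) →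
      g = 1) → ∀ Δ ∈ 𝓒, ∀ g ∈ G, (∀ Δ' ∈ 𝓒, Δ'.image ⇑g = Δ') → (∀ ω ∈ Δ, g ω = ω) → g = 1 :=
    fun h Δ hΔ g hg hgC hgΔ => congrArg Subtype.val (h ⟨g, hg⟩ ⟨Δ, hΔ⟩
      (fun Δ' => Subtype.ext (hgC Δ'.1 Δ'.2)) fun x hx => hgΔ x ((hcl x _).mp hx))
  simp only [Prod.mk.injEq] at htuple
  rcases htuple with ⟨rfl, rfl, rfl, rfl, rfl, rfl⟩ |
    ⟨rfl, rfl, rfl, rfl, rfl, rfl⟩ | ⟨rfl, rfl, rfl, rfl, rfl, rfl⟩ |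
    ⟨rfl, rfl, rfl, rfl, rfl, rfl⟩ | ⟨rfl, rfl, rfl, rfl, rfl, rfl⟩
  · refine ⟨hkernel (D.not_faithful_of_card_hundred (Or.inl rfl) hC), hfaithful fun g Δ hgC hgΔ =>
      D.eq_one_of_smul_class_eq_of_smul_eq (by norm_num) (r := 27)
        (fun α => by have := hdesign α; omega) (fun m hm0 hmc hdvd hprime => ?_) hgC hgΔ⟩
    obtain rfl | rfl : m = 1 ∨ m = 10 := by omega
    · rfl
    · exact absurd (hprime 5 (by norm_num) (by norm_num)) (by norm_num)
  · refine ⟨hkernel (D.not_faithful_of_card_hundred (Or.inr rfl) hC), hfaithful fun g Δ hgC hgΔ =>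
      D.eq_one_of_smul_class_eq_of_smul_eq (by norm_num) (r := 36)
        (fun α => by have := hdesign α; omega) (fun m hm0 hmc hdvd hprime => ?_) hgC hgΔ⟩
    obtain rfl | rfl : m = 1 ∨ m = 10 := by omega
    · rfl
    · exact absurd (hprime 5 (by norm_num) (by norm_num)) (by norm_num)
  · refine ⟨hkernel (D.not_faithful_of_card_two_hundred_thirty_one hC), hfaithful fun g Δ hgC hgΔ =>
      D.eq_one_of_smul_class_eq_of_smul_eq (by norm_num) (r := 40)
        (fun α => by have := hdesign α; omega) (fun m hm0 hmc hdvd hprime => ?_) hgC hgΔ⟩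
    obtain rfl | rfl : m = 1 ∨ m = 11 := by omega
    · rfl
    · exact absurd (hprime 11 (by norm_num) (by norm_num)) (by norm_num)
  · refine ⟨hkernel (D.not_faithful_of_twenty_eight_classes hC), hfaithful fun g Δ hgC hgΔ =>
      D.eq_one_of_smul_class_eq_of_smul_eq (by norm_num) (r := 36)
        (fun α => by have := hdesign α; omega) (fun m hm0 hmc hdvd hprime => ?_) hgC hgΔ⟩
    obtain rfl | rfl : m = 1 ∨ m = 10 := by omega
    · rfl
    · exact absurd (hprime 5 (by norm_num) (by norm_num)) (by norm_num)
  · refine ⟨hkernel (D.not_faithful_of_ten_classes hC), hfaithful fun g Δ hgC hgΔ =>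
      D.eq_one_of_smul_class_eq_of_smul_eq (by norm_num) (r := 36)
        (fun α => by have := hdesign α; omega) (fun m hm0 hmc hdvd hprime => ?_) hgC hgΔ⟩
    obtain rfl | rfl | rfl | rfl : m = 1 ∨ m = 10 ∨ m = 19 ∨ m = 28 := by omega
    · rfl
    · exact absurd (hprime 5 (by norm_num) (by norm_num)) (by norm_num)
    · exact absurd (hprime 19 (by norm_num) (by norm_num)) (by norm_num)
    · exact absurd (hprime 7 (by norm_num) (by norm_num)) (by norm_num)
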